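/- arXiv:1705.08539 — 14 statements merged into one kernel-verified Lean document; each statement's English description precedes it below -/
import Mathlib

section
/- Let 1 ≤ d ≤ n−1 and let 𝓕 be a d-separating family of subsets of [n]. Then the dual family {𝓕_a : a ∈ [n]} is d-union-free. -/
/-- The dual family `{𝓕_a : a ∈ [n]}` of a family `𝓕` of subsets of `[n]`, where
`𝓕_a = {F ∈ 𝓕 : a ∈ F}`. -/
def dualFam {n : ℕ} (𝓕 : Finset (Finset (Fin n))) : Finset (Finset (Finset (Fin n))) :=
  Finset.univ.image (fun a : Fin n => 𝓕.filter (fun F => a ∈ F))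

/-- the dual of a `d`-separating family (with `1 ≤ d ≤ n-1`) is `d`-union-free. -/
theorem dual_of_dSeparating_is_dUnionFree (n d : ℕ) (hd : 1 ≤ d) (hdn : d ≤ n - 1)
    (𝓕 : Finset (Finset (Fin n)))
    (hsep : ∀ X Y : Finset (Fin n), X.card = d → Y.card = d → X ≠ Y →
      ∃ F ∈ 𝓕, ((F ∩ X).Nonempty ∧ ¬ (F ∩ Y).Nonempty) ∨
        ((F ∩ Y).Nonempty ∧ ¬ (F ∩ X).Nonempty)) :
    ∀ G H : Fin d → Finset (Finset (Fin n)),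
      Function.Injective G → Function.Injective H →
      (∀ i, G i ∈ dualFam 𝓕) → (∀ i, H i ∈ dualFam 𝓕) →
      Finset.univ.sup G = Finset.univ.sup H →
      Finset.image G Finset.univ = Finset.image H Finset.univ := by
  intro G H hG hH hGd hHd hsup
  have key : ∀ G : Fin d → Finset (Finset (Fin n)), (∀ i, G i ∈ dualFam 𝓕) →
      ∃ a : Fin d → Fin n, ∀ i, G i = 𝓕.filter (fun F => a i ∈ F) := by
    intro G hG
    have h : ∀ i, ∃ a : Fin n, G i = 𝓕.filter (fun F => a ∈ F) := by
      intro i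
      have hi := hG i
      unfold dualFam at hi
      obtain ⟨a, -, ha⟩ := Finset.mem_image.mp hi
      exact ⟨a, ha.symm⟩
    choose a ha using h
    exact ⟨a, ha⟩
  have hit : ∀ (G : Fin d → Finset (Finset (Fin n))) (a : Fin d → Fin n),
      (∀ i, G i = 𝓕.filter (fun F => a i ∈ F)) → ∀ F ∈ 𝓕,
      ((F ∩ Finset.univ.image a).Nonempty ↔ F ∈ Finset.univ.sup G) := by
    intro G a ha F hF
    rw [Finset.mem_sup]
    constructor
    · rintro ⟨x, hx⟩
      obtain ⟨hxF, hxa⟩ := Finset.mem_inter.mp hx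
      obtain ⟨i, -, rfl⟩ := Finset.mem_image.mp hxa
      exact ⟨i, Finset.mem_univ i, by rw [ha i]; exact Finset.mem_filter.mpr ⟨hF, hxF⟩⟩
    · rintro ⟨i, -, hi⟩
      rw [ha i] at hi
      exact ⟨a i, Finset.mem_inter.mpr ⟨(Finset.mem_filter.mp hi).2,
        Finset.mem_image_of_mem a (Finset.mem_univ i)⟩⟩
  have hcard : ∀ (G : Fin d → Finset (Finset (Fin n))) (a : Fin d → Fin n),
      (∀ i, G i = 𝓕.filter (fun F => a i ∈ F)) → Function.Injective G →
      (Finset.univ.image a).card = d := by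
    intro G a ha hG
    have hinj : Function.Injective a := by
      intro i j hij
      apply hG
      rw [ha i, ha j, hij]
    rw [Finset.card_image_of_injective _ hinj, Finset.card_univ, Fintype.card_fin]
  obtain ⟨a, ha⟩ := key G hGd
  obtain ⟨b, hb⟩ := key H hHd
  by_cases hXY : Finset.univ.image a = Finset.univ.image b
  · have himg : ∀ (G : Fin d → Finset (Finset (Fin n))) (a : Fin d → Fin n),
        (∀ i, G i = 𝓕.filter (fun F => a i ∈ F)) →
        Finset.univ.image G =
          (Finset.univ.image a).image (fun x => 𝓕.filter (fun F => x ∈ F)) := by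
      intro G a ha
      rw [Finset.image_image]
      exact Finset.image_congr (fun i _ => ha i)
    rw [himg G a ha, himg H b hb, hXY]
  · exfalso
    obtain ⟨F, hF, h⟩ := hsep _ _ (hcard G a ha hG) (hcard H b hb hH) hXY
    rw [hit G a ha F hF, hit H b hb F hF, hsup] at h
    tauto
end

section
/- Let d ≥ 1, n ≥ d+1, and let 𝓕 be a family of subsets of [n] such that the sets 𝓕_a (a ∈ [n]) are pairwise distinct. Then the following are equivalent: (i) for every x ∈ [n] and every D ⊆ [n] with |D| = d and x ∉ D there exists F ∈ 𝓕 with x ∈ F and F ∩ D = ∅; (ii) the dual family {𝓕_a : a ∈ [n]} is d-cover-free. (Condition (i) expresses that in the group testing model every element always finds out whether it is defective; this is Model 1_d.) -/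
/-- for `d ≥ 1`, `n ≥ d+1` and a family `𝓕` with pairwise distinct `𝓕_a`,
every element always finds out whether it is defective (Model 1_d, i.e. for every `x` and
every `d`-set `D` avoiding `x` there is a query containing `x` and disjoint from `D`) iff
the dual family is `d`-cover-free. -/
theorem model1d_iff_dual_coverFree (n d : ℕ) (hd : 1 ≤ d) (hn : d + 1 ≤ n)
    (𝓕 : Finset (Finset (Fin n)))
    (hdist : ∀ a b : Fin n,
      𝓕.filter (fun F => a ∈ F) = 𝓕.filter (fun F => b ∈ F) → a = b) :
    (∀ x : Fin n, ∀ D : Finset (Fin n), D.card = d → x ∉ D →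
      ∃ F ∈ 𝓕, x ∈ F ∧ F ∩ D = ∅) ↔
    ¬ ∃ G : Fin (d + 1) → Finset (Finset (Fin n)),
      Function.Injective G ∧
      (∀ i, G i ∈ dualFam 𝓕) ∧
      G (Fin.last d) ⊆ (Finset.univ : Finset (Fin d)).sup (fun i => G i.castSucc) := by
  constructor
  · rintro h ⟨G, hG, hmem, hsub⟩
    have hm : ∀ i, ∃ a : Fin n, 𝓕.filter (fun F => a ∈ F) = G i := by
      intro i
      simpa [dualFam] using hmem i
    choose a ha using hm
    have hinj : Function.Injective a := by
      intro i j hij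
      apply hG
      rw [← ha i, ← ha j, hij]
    obtain ⟨F, hF, hxF, hFD⟩ := h (a (Fin.last d))
      ((Finset.univ : Finset (Fin d)).image (fun i => a i.castSucc))
      (by
        refine (Finset.card_image_of_injective _
          (hinj.comp (Fin.castSucc_injective d))).trans ?_
        simp)
      (by
        simp only [Finset.mem_image, Finset.mem_univ, true_and, not_exists]
        intro i hi
        exact (Fin.castSucc_lt_last i).ne (hinj hi))
    have h1 : F ∈ G (Fin.last d) := by
      rw [← ha]
      exact Finset.mem_filter.2 ⟨hF, hxF⟩
    obtain ⟨i, -, hi⟩ := Finset.mem_sup.1 (hsub h1)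
    rw [← ha] at hi
    have h2 := (Finset.mem_filter.1 hi).2
    have h3 : a i.castSucc ∈ F ∩
        (Finset.univ : Finset (Fin d)).image (fun i => a i.castSucc) :=
      Finset.mem_inter.2 ⟨h2, Finset.mem_image.2 ⟨i, Finset.mem_univ _, rfl⟩⟩
    rw [hFD] at h3
    exact Finset.notMem_empty _ h3
  · intro h x D hD hx
    by_contra hno
    apply h
    let e := D.equivFinOfCardEq hD
    let a : Fin (d + 1) → Fin n := Fin.snoc (α := fun _ => Fin n) (fun i => (e.symm i : Fin n)) x
    have hal : a (Fin.last d) = x := by simp [a]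
    have hac : ∀ i : Fin d, a i.castSucc = (e.symm i : Fin n) := by
      intro i
      simp [a]
    have hinj : Function.Injective a := by
      intro i j
      refine Fin.lastCases ?_ (fun i => ?_) i <;> refine Fin.lastCases ?_ (fun j => ?_) j
      · intro _
        rfl
      · intro hij
        rw [hal, hac] at hij
        exact absurd (hij ▸ (e.symm j).2) hx
      · intro hij
        rw [hal, hac] at hij
        exact absurd (hij ▸ (e.symm i).2) hx
      · intro hij
        rw [hac, hac] at hij
        rw [e.symm.injective (Subtype.ext hij)]
    refine ⟨fun i => 𝓕.filter (fun F => a i ∈ F), ?_, ?_, ?_⟩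
    · intro i j hij
      exact hinj (hdist _ _ hij)
    · intro i
      exact Finset.mem_image.2 ⟨a i, Finset.mem_univ _, rfl⟩
    · intro F hF
      obtain ⟨hF, hxF⟩ := Finset.mem_filter.1 hF
      rw [hal] at hxF
      have hne : (F ∩ D).Nonempty := by
        rw [Finset.nonempty_iff_ne_empty]
        exact fun h0 => hno ⟨F, hF, hxF, h0⟩
      obtain ⟨y, hy⟩ := hne
      obtain ⟨hyF, hyD⟩ := Finset.mem_inter.1 hy
      refine Finset.mem_sup.2 ⟨e ⟨y, hyD⟩, Finset.mem_univ _, Finset.mem_filter.2 ⟨hF, ?_⟩⟩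
      rw [hac]
      simpa using hyF
end

section
/- Let d ≥ 1 and let 𝓕 be a family of subsets of [n] satisfying the Model 2'_d property: for every x ∈ [n], every D ⊆ [n] with |D| = d and x ∉ D, and every D' ⊆ [n] with |D'| = d and D' ≠ D, there exists F ∈ 𝓕 with x ∈ F such that exactly one of F ∩ D and F ∩ D' is nonempty. Then the dual family {𝓕_a : a ∈ [n]} is d-cover-free. -/
/-- if `𝓕` satisfies the Model 2'_d property (every non-defective element can
identify the set of `d` defectives), then the dual family is `d`-cover-free. -/
theorem model2dprime_implies_dual_coverFree (n d : ℕ) (hd : 1 ≤ d)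
    (𝓕 : Finset (Finset (Fin n)))
    (hmodel : ∀ x : Fin n, ∀ D : Finset (Fin n), D.card = d → x ∉ D →
      ∀ D' : Finset (Fin n), D'.card = d → D' ≠ D →
        ∃ F ∈ 𝓕, x ∈ F ∧
          (((F ∩ D).Nonempty ∧ ¬ (F ∩ D').Nonempty) ∨
            ((F ∩ D').Nonempty ∧ ¬ (F ∩ D).Nonempty))) :
    ¬ ∃ G : Fin (d + 1) → Finset (Finset (Fin n)),
      Function.Injective G ∧
      (∀ i, G i ∈ dualFam 𝓕) ∧
      G (Fin.last d) ⊆ (Finset.univ : Finset (Fin d)).sup (fun i => G i.castSucc) := by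
  rintro ⟨G, hinj, hmem, hsub⟩
  have h1 : ∀ i, ∃ a : Fin n, 𝓕.filter (fun F => a ∈ F) = G i := by
    intro i
    simpa [dualFam] using hmem i
  choose a ha using h1
  have hainj : Function.Injective a := by
    intro i j hij
    apply hinj
    rw [← ha i, ← ha j, hij]
  have hbinj : Function.Injective (fun i : Fin d => a i.castSucc) :=
    hainj.comp (Fin.castSucc_injective d)
  set D : Finset (Fin n) := Finset.univ.image (fun i : Fin d => a i.castSucc) with hD
  have hDcard : D.card = d := by
    rw [hD, Finset.card_image_of_injective _ hbinj]; simp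
  have hx : a (Fin.last d) ∉ D := by
    intro h
    obtain ⟨i, -, hi⟩ := Finset.mem_image.1 h
    exact (Fin.castSucc_lt_last i).ne (hainj hi)
  have hy : a (Fin.castSucc ⟨0, hd⟩) ∈ D :=
    Finset.mem_image.2 ⟨⟨0, hd⟩, Finset.mem_univ _, rfl⟩
  have hcard' : (insert (a (Fin.last d)) (D.erase (a (Fin.castSucc ⟨0, hd⟩)))).card = d := by
    rw [Finset.card_insert_of_notMem (fun h => hx (Finset.mem_of_mem_erase h)),
      Finset.card_erase_of_mem hy, hDcard]
    omega
  obtain ⟨F, hF, hxF, h⟩ := hmodel (a (Fin.last d)) D hDcard hx _ hcard'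
    (fun h => hx (h ▸ Finset.mem_insert_self _ _))
  have n1 : (F ∩ insert (a (Fin.last d)) (D.erase (a (Fin.castSucc ⟨0, hd⟩)))).Nonempty :=
    ⟨_, Finset.mem_inter.2 ⟨hxF, Finset.mem_insert_self _ _⟩⟩
  have n2 : (F ∩ D).Nonempty := by
    have hFG : F ∈ G (Fin.last d) := by
      rw [← ha]; exact Finset.mem_filter.2 ⟨hF, hxF⟩
    obtain ⟨i, -, hi⟩ := Finset.mem_sup.1 (hsub hFG)
    rw [← ha] at hi
    exact ⟨_, Finset.mem_inter.2 ⟨(Finset.mem_filter.1 hi).2,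
      Finset.mem_image.2 ⟨i, Finset.mem_univ _, rfl⟩⟩⟩
  tauto
end

section
/- Let d ≥ 1, n ≥ d+2, and let 𝓕 be a family of subsets of [n] such that the sets 𝓕_a (a ∈ [n]) are pairwise distinct and the dual family {𝓕_a : a ∈ [n]} is (2,d)-cover-free. Then 𝓕 has the Model 2'_d property: for every x ∈ [n], every D ⊆ [n] with |D| = d and x ∉ D, and every D' ⊆ [n] with |D'| = d and D' ≠ D, there exists F ∈ 𝓕 with x ∈ F such that exactly one of F ∩ D and F ∩ D' is nonempty. -/
/-- if `d ≥ 1`, `n ≥ d+2`, the sets `𝓕_a` are pairwise distinct and the dual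
family is `(2,d)`-cover-free (no `d+2` pairwise distinct members with the intersection of the
last two contained in the union of the first `d`), then `𝓕` has the Model 2'_d property. -/
theorem dual_two_d_coverFree_implies_model2dprime (n d : ℕ) (hd : 1 ≤ d) (hn : d + 2 ≤ n)
    (𝓕 : Finset (Finset (Fin n)))
    (hdist : ∀ a b : Fin n,
      𝓕.filter (fun F => a ∈ F) = 𝓕.filter (fun F => b ∈ F) → a = b)
    (hcf : ¬ ∃ G : Fin (d + 2) → Finset (Finset (Fin n)),
      Function.Injective G ∧
      (∀ i, G i ∈ dualFam 𝓕) ∧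
      G ⟨d, by omega⟩ ∩ G (Fin.last (d + 1)) ⊆
        (Finset.univ : Finset (Fin d)).sup (fun i => G (Fin.castLE (by omega) i))) :
    ∀ x : Fin n, ∀ D : Finset (Fin n), D.card = d → x ∉ D →
      ∀ D' : Finset (Fin n), D'.card = d → D' ≠ D →
        ∃ F ∈ 𝓕, x ∈ F ∧
          (((F ∩ D).Nonempty ∧ ¬ (F ∩ D').Nonempty) ∨
            ((F ∩ D').Nonempty ∧ ¬ (F ∩ D).Nonempty)) := by
  have key : ∀ x y : Fin n, ∀ D : Finset (Fin n), D.card = d → x ∉ D → y ∉ D → x ≠ y →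
      ∃ F ∈ 𝓕, x ∈ F ∧ y ∈ F ∧ ∀ z ∈ D, z ∉ F := by
    intro x y D hD hx hy hxy
    by_contra hno
    apply hcf
    let e := D.orderEmbOfFin hD
    have he : ∀ i, e i ∈ D := fun i => D.orderEmbOfFin_mem hD i
    have hsurj : ∀ z ∈ D, ∃ i, e i = z := by
      intro z hz
      have : z ∈ Set.range (D.orderEmbOfFin hD) := by
        rw [Finset.range_orderEmbOfFin]; exact hz
      exact this
    let g : Fin (d + 2) → Fin n := fun i =>
      if h : i.val < d then e ⟨i.val, h⟩ else if i.val = d then x else y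
    have hg : Function.Injective g := by
      intro i j hij
      simp only [g] at hij
      apply Fin.ext
      have hi := i.2
      have hj := j.2
      split_ifs at hij with h1 h2 h3 h4 h5 h6 h7 h8
      all_goals first
        | omega
        | (have := e.injective hij; simpa using this)
        | (exfalso; first
            | exact hxy hij
            | exact hxy hij.symm
            | exact hx (hij ▸ he _)
            | exact hy (hij ▸ he _))
    refine ⟨fun i => 𝓕.filter (fun F => g i ∈ F), ?_, ?_, ?_⟩
    · intro i j hij
      exact hg (hdist _ _ hij)
    · intro i
      exact Finset.mem_image_of_mem _ (Finset.mem_univ _)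
    · intro F hF
      have h1 : g ⟨d, by omega⟩ = x := by simp [g]
      have h2 : g (Fin.last (d + 1)) = y := by simp [g]
      simp only [h1, h2, Finset.mem_inter, Finset.mem_filter] at hF
      have : ∃ z ∈ D, z ∈ F := by
        by_contra hz
        push Not at hz
        exact hno ⟨F, hF.1.1, hF.1.2, hF.2.2, hz⟩
      obtain ⟨z, hz, hzF⟩ := this
      obtain ⟨i, rfl⟩ := hsurj z hz
      rw [Finset.mem_sup]
      refine ⟨i, Finset.mem_univ _, ?_⟩
      simp only [Finset.mem_filter]
      refine ⟨hF.1.1, ?_⟩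
      simpa [g] using hzF
  intro x D hD hx D' hD' hne
  have fin : ∀ y w : Fin n, y ∉ D → x ≠ y → w ∈ D' → (w = x ∨ w = y) →
      ∃ F ∈ 𝓕, x ∈ F ∧
          (((F ∩ D).Nonempty ∧ ¬ (F ∩ D').Nonempty) ∨
            ((F ∩ D').Nonempty ∧ ¬ (F ∩ D).Nonempty)) := by
    intro y w hy hxy hw hwe
    obtain ⟨F, hF, hxF, hyF, hz⟩ := key x y D hD hx hy hxy
    refine ⟨F, hF, hxF, Or.inr ⟨⟨w, ?_⟩, ?_⟩⟩
    · rw [Finset.mem_inter]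
      refine ⟨?_, hw⟩
      rcases hwe with rfl | rfl <;> assumption
    · rintro ⟨z, h⟩
      rw [Finset.mem_inter] at h
      exact hz z h.2 h.1
  by_cases hxD' : x ∈ D'
  · have : ∃ y, y ∉ insert x D := by
      by_contra hall
      push Not at hall
      have h1 : insert x D = Finset.univ := Finset.eq_univ_iff_forall.2 hall
      have h2 := Finset.card_insert_of_notMem hx
      rw [h1, Finset.card_univ, Fintype.card_fin] at h2
      omega
    obtain ⟨y, hy⟩ := this
    rw [Finset.mem_insert, not_or] at hy
    exact fin y x hy.2 (Ne.symm hy.1) hxD' (Or.inl rfl)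
  · have : ¬ D' ⊆ D := fun h => hne (Finset.eq_of_subset_of_card_le h (by omega))
    obtain ⟨y, hy, hyD⟩ := Finset.not_subset.1 this
    exact fin y y hyD (fun h => hxD' (h ▸ hy)) hy (Or.inr rfl)
end

section
/- Let d ≥ 1, n ≥ d+1, let 𝓕 be a family of subsets of [n] such that the sets 𝓕_a (a ∈ [n]) are pairwise distinct, let 𝓖 := {𝓕_a : a ∈ [n]} be the dual family, and let 𝓖^d := {G_1 ∪ ⋯ ∪ G_d : G_1,…,G_d pairwise distinct members of 𝓖}. Then 𝓕 satisfies property •1 (for any two distinct X, Y ⊆ [n] with |X| = |Y| = d there exists F ∈ 𝓕 with F ∩ X ≠ ∅ and F ∩ Y = ∅) if and only if 𝓖 is d-union-free and 𝓖^d is Sperner. -/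
/-- `𝓖^d`: the family of all unions of `d` pairwise distinct members of `𝓖`. -/
def dFoldUnions {n : ℕ} (d : ℕ) (𝓖 : Finset (Finset (Finset (Fin n)))) :
    Set (Finset (Finset (Fin n))) :=
  {U | ∃ G : Fin d → Finset (Finset (Fin n)),
    Function.Injective G ∧ (∀ i, G i ∈ 𝓖) ∧ U = Finset.univ.sup G}

theorem aux_mem_sup {n : ℕ} (𝓕 : Finset (Finset (Fin n))) (X : Finset (Fin n))
    (F : Finset (Fin n)) :
    F ∈ X.sup (fun a : Fin n => 𝓕.filter (fun F => a ∈ F)) ↔ F ∈ 𝓕 ∧ (F ∩ X).Nonempty := by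
  simp only [Finset.mem_sup, Finset.mem_filter, Finset.Nonempty, Finset.mem_inter]
  constructor
  · rintro ⟨a, ha, hF, haF⟩
    exact ⟨hF, a, haF, ha⟩
  · rintro ⟨hF, a, haF, ha⟩
    exact ⟨a, ha, hF, haF⟩

theorem aux_to_set {n d : ℕ} (𝓕 : Finset (Finset (Fin n)))
    (G : Fin d → Finset (Finset (Fin n))) (hG : Function.Injective G)
    (hm : ∀ i, G i ∈ dualFam 𝓕) :
    ∃ X : Finset (Fin n), X.card = d ∧
      Finset.image G Finset.univ = X.image (fun a : Fin n => 𝓕.filter (fun F => a ∈ F)) ∧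
      Finset.univ.sup G = X.sup (fun a : Fin n => 𝓕.filter (fun F => a ∈ F)) := by
  have h : ∀ i, ∃ a : Fin n, 𝓕.filter (fun F => a ∈ F) = G i := by
    intro i
    simpa [dualFam] using hm i
  choose g hg using h
  have hgG : (fun a : Fin n => 𝓕.filter (fun F => a ∈ F)) ∘ g = G := funext hg
  have hgi : Function.Injective g := by
    rw [← hgG] at hG
    exact hG.of_comp
  refine ⟨Finset.univ.image g, ?_, ?_, ?_⟩
  · rw [Finset.card_image_of_injective _ hgi, Finset.card_fin]
  · rw [Finset.image_image, hgG]
  · rw [Finset.sup_image, hgG]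

theorem aux_of_set {n d : ℕ} (𝓕 : Finset (Finset (Fin n)))
    (hf : Function.Injective (fun a : Fin n => 𝓕.filter (fun F => a ∈ F)))
    (X : Finset (Fin n)) (hX : X.card = d) :
    ∃ G : Fin d → Finset (Finset (Fin n)), Function.Injective G ∧ (∀ i, G i ∈ dualFam 𝓕) ∧
      Finset.image G Finset.univ = X.image (fun a : Fin n => 𝓕.filter (fun F => a ∈ F)) ∧
      Finset.univ.sup G = X.sup (fun a : Fin n => 𝓕.filter (fun F => a ∈ F)) := by
  have himg : Finset.univ.image (X.orderEmbOfFin hX) = X := by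
    apply Finset.coe_injective
    simp
  refine ⟨(fun a : Fin n => 𝓕.filter (fun F => a ∈ F)) ∘ X.orderEmbOfFin hX,
    hf.comp (X.orderEmbOfFin hX).injective, ?_, ?_, ?_⟩
  · intro i
    exact Finset.mem_image_of_mem _ (Finset.mem_univ _)
  · rw [← Finset.image_image, himg]
  · rw [← Finset.sup_image, himg]

/-- for `d ≥ 1`, `n ≥ d+1` and `𝓕` with pairwise distinct `𝓕_a`, property •1
(for any two distinct `d`-sets `X, Y` there is `F ∈ 𝓕` meeting `X` and disjoint from `Y`)
holds iff the dual family `𝓖` is `d`-union-free and `𝓖^d` is Sperner. -/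
theorem bullet1_iff_unionFree_and_sperner (n d : ℕ) (hd : 1 ≤ d) (hn : d + 1 ≤ n)
    (𝓕 : Finset (Finset (Fin n)))
    (hdist : ∀ a b : Fin n,
      𝓕.filter (fun F => a ∈ F) = 𝓕.filter (fun F => b ∈ F) → a = b) :
    (∀ X Y : Finset (Fin n), X.card = d → Y.card = d → X ≠ Y →
      ∃ F ∈ 𝓕, (F ∩ X).Nonempty ∧ F ∩ Y = ∅) ↔
    ((∀ G H : Fin d → Finset (Finset (Fin n)),
        Function.Injective G → Function.Injective H →
        (∀ i, G i ∈ dualFam 𝓕) → (∀ i, H i ∈ dualFam 𝓕) →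
        Finset.univ.sup G = Finset.univ.sup H →
        Finset.image G Finset.univ = Finset.image H Finset.univ) ∧
      (∀ A ∈ dFoldUnions d (dualFam 𝓕), ∀ B ∈ dFoldUnions d (dualFam 𝓕),
        A ≠ B → ¬ A ⊆ B)) := by
  have hf : Function.Injective (fun a : Fin n => 𝓕.filter (fun F => a ∈ F)) :=
    fun a b h => hdist a b h
  constructor
  · intro h
    have key : ∀ X Y : Finset (Fin n), X.card = d → Y.card = d →
        X.sup (fun a : Fin n => 𝓕.filter (fun F => a ∈ F)) ⊆
          Y.sup (fun a : Fin n => 𝓕.filter (fun F => a ∈ F)) → X = Y := by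
      intro X Y hX hY hsub
      by_contra hne
      obtain ⟨F, hF, hFX, hFY⟩ := h X Y hX hY hne
      have h1 := hsub ((aux_mem_sup 𝓕 X F).2 ⟨hF, hFX⟩)
      have h2 := ((aux_mem_sup 𝓕 Y F).1 h1).2
      rw [hFY] at h2
      exact Finset.not_nonempty_empty h2
    constructor
    · intro G H hG hH hGm hHm hs
      obtain ⟨X, hX, hXi, hXs⟩ := aux_to_set 𝓕 G hG hGm
      obtain ⟨Y, hY, hYi, hYs⟩ := aux_to_set 𝓕 H hH hHm
      have hXY := key X Y hX hY (by rw [← hXs, ← hYs, hs])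
      rw [hXi, hYi, hXY]
    · rintro A ⟨G, hG, hGm, rfl⟩ B ⟨H, hH, hHm, rfl⟩ hne hsub
      obtain ⟨X, hX, hXi, hXs⟩ := aux_to_set 𝓕 G hG hGm
      obtain ⟨Y, hY, hYi, hYs⟩ := aux_to_set 𝓕 H hH hHm
      have hXY := key X Y hX hY (by rw [← hXs, ← hYs]; exact hsub)
      exact hne (by rw [hXs, hYs, hXY])
  · rintro ⟨huf, hsp⟩ X Y hX hY hne
    obtain ⟨G, hG, hGm, hGi, hGs⟩ := aux_of_set 𝓕 hf X hX
    obtain ⟨H, hH, hHm, hHi, hHs⟩ := aux_of_set 𝓕 hf Y hY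
    by_contra hcon
    have hsub : Finset.univ.sup G ⊆ Finset.univ.sup H := by
      rw [hGs, hHs]
      intro F hF
      obtain ⟨hF1, hF2⟩ := (aux_mem_sup 𝓕 X F).1 hF
      refine (aux_mem_sup 𝓕 Y F).2 ⟨hF1, ?_⟩
      by_contra hY0
      exact hcon ⟨F, hF1, hF2, Finset.not_nonempty_iff_eq_empty.1 hY0⟩
    by_cases heq : Finset.univ.sup G = Finset.univ.sup H
    · have := huf G H hG hH hGm hHm heq
      rw [hGi, hHi] at this
      exact hne (Finset.image_injective hf this)
    · exact hsp _ ⟨G, hG, hGm, rfl⟩ _ ⟨H, hH, hHm, rfl⟩ heq hsub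
end

section
/- Let d ≥ 1, n ≥ d+1, let 𝓕 be a family of subsets of [n] such that the sets 𝓕_a (a ∈ [n]) are pairwise distinct, let 𝓖 := {𝓕_a : a ∈ [n]} be the dual family, and let 𝓖^d := {G_1 ∪ ⋯ ∪ G_d : G_1,…,G_d pairwise distinct members of 𝓖}. Then 𝓕 satisfies properties •1 and •2 if and only if 𝓖 is d-union-free, 𝓖^d is Sperner, and 𝓖^d is intersection cancellative. Here •1 is: for any two distinct X, Y ⊆ [n] with |X| = |Y| = d there exists F ∈ 𝓕 with F ∩ X ≠ ∅ and F ∩ Y = ∅; and •2 is: for any three pairwise distinct X, Y, Z ⊆ [n] with |X| = |Y| = |Z| = d there exists F ∈ 𝓕 with either (F ∩ X ≠ ∅, F ∩ Y ≠ ∅ and F ∩ Z = ∅) or (F ∩ X ≠ ∅, F ∩ Z ≠ ∅ and F ∩ Y = ∅). -/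
/-- The members of `𝓕` meeting `X`. -/
def meetFam {n : ℕ} (𝓕 : Finset (Finset (Fin n))) (X : Finset (Fin n)) :
    Finset (Finset (Fin n)) :=
  𝓕.filter (fun F => (F ∩ X).Nonempty)

lemma mem_meetFam {n : ℕ} (𝓕 : Finset (Finset (Fin n))) (X F : Finset (Fin n)) :
    F ∈ meetFam 𝓕 X ↔ F ∈ 𝓕 ∧ (F ∩ X).Nonempty := by
  simp [meetFam]

lemma sup_eq_meetFam {n d : ℕ} (𝓕 : Finset (Finset (Fin n))) (g : Fin d → Fin n) :
    (Finset.univ.sup fun i => 𝓕.filter (fun F => g i ∈ F)) =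
      meetFam 𝓕 (Finset.univ.image g) := by
  ext F
  simp only [Finset.mem_sup, mem_meetFam, Finset.Nonempty, Finset.mem_inter, Finset.mem_image,
    Finset.mem_filter, Finset.mem_univ, true_and]
  constructor
  · rintro ⟨i, h1, h2⟩
    exact ⟨h1, g i, h2, i, rfl⟩
  · rintro ⟨h1, _, h2, i, rfl⟩
    exact ⟨i, h1, h2⟩

lemma exists_set_of_tuple {n d : ℕ} (𝓕 : Finset (Finset (Fin n)))
    (G : Fin d → Finset (Finset (Fin n))) (hG : Function.Injective G)
    (hm : ∀ i, G i ∈ dualFam 𝓕) :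
    ∃ X : Finset (Fin n), X.card = d ∧ Finset.univ.sup G = meetFam 𝓕 X ∧
      Finset.image G Finset.univ = X.image (fun a => 𝓕.filter (fun F => a ∈ F)) := by
  simp only [dualFam, Finset.mem_image, Finset.mem_univ, true_and] at hm
  choose g hg using hm
  obtain rfl : (fun i => 𝓕.filter (fun F => g i ∈ F)) = G := funext hg
  have hinj : Function.Injective g := by
    intro i j h
    apply hG
    simp only [h]
  refine ⟨Finset.univ.image g, ?_, sup_eq_meetFam 𝓕 g, ?_⟩
  · rw [Finset.card_image_of_injective _ hinj]; simp
  · rw [Finset.image_image]; rfl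

lemma exists_tuple_of_set {n d : ℕ} (𝓕 : Finset (Finset (Fin n)))
    (hdist : ∀ a b : Fin n,
      𝓕.filter (fun F => a ∈ F) = 𝓕.filter (fun F => b ∈ F) → a = b)
    (X : Finset (Fin n)) (hX : X.card = d) :
    ∃ G : Fin d → Finset (Finset (Fin n)), Function.Injective G ∧ (∀ i, G i ∈ dualFam 𝓕) ∧
      Finset.univ.sup G = meetFam 𝓕 X ∧
      Finset.image G Finset.univ = X.image (fun a => 𝓕.filter (fun F => a ∈ F)) := by
  have him : Finset.univ.image (X.orderEmbOfFin hX) = X := by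
    apply Finset.coe_injective
    simp
  refine ⟨fun i => 𝓕.filter (fun F => X.orderEmbOfFin hX i ∈ F), ?_, ?_, ?_, ?_⟩
  · intro i j h
    exact (X.orderEmbOfFin hX).injective (hdist _ _ h)
  · intro i
    exact Finset.mem_image_of_mem _ (Finset.mem_univ _)
  · rw [sup_eq_meetFam, him]
  · conv_rhs => rw [← him]
    rw [Finset.image_image]; rfl

/-- for `d ≥ 1`, `n ≥ d+1` and `𝓕` with pairwise distinct `𝓕_a`, properties
•1 and •2 hold iff the dual family `𝓖` is `d`-union-free, `𝓖^d` is Sperner and `𝓖^d` is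
intersection cancellative. -/
theorem bullets_iff_unionFree_sperner_intCancellative (n d : ℕ) (hd : 1 ≤ d) (hn : d + 1 ≤ n)
    (𝓕 : Finset (Finset (Fin n)))
    (hdist : ∀ a b : Fin n,
      𝓕.filter (fun F => a ∈ F) = 𝓕.filter (fun F => b ∈ F) → a = b) :
    ((∀ X Y : Finset (Fin n), X.card = d → Y.card = d → X ≠ Y →
        ∃ F ∈ 𝓕, (F ∩ X).Nonempty ∧ F ∩ Y = ∅) ∧
      (∀ X Y Z : Finset (Fin n), X.card = d → Y.card = d → Z.card = d →
        X ≠ Y → X ≠ Z → Y ≠ Z →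
        ∃ F ∈ 𝓕, ((F ∩ X).Nonempty ∧ (F ∩ Y).Nonempty ∧ F ∩ Z = ∅) ∨
          ((F ∩ X).Nonempty ∧ (F ∩ Z).Nonempty ∧ F ∩ Y = ∅))) ↔
    ((∀ G H : Fin d → Finset (Finset (Fin n)),
        Function.Injective G → Function.Injective H →
        (∀ i, G i ∈ dualFam 𝓕) → (∀ i, H i ∈ dualFam 𝓕) →
        Finset.univ.sup G = Finset.univ.sup H →
        Finset.image G Finset.univ = Finset.image H Finset.univ) ∧
      (∀ A ∈ dFoldUnions d (dualFam 𝓕), ∀ B ∈ dFoldUnions d (dualFam 𝓕),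
        A ≠ B → ¬ A ⊆ B) ∧
      (∀ A ∈ dFoldUnions d (dualFam 𝓕), ∀ B ∈ dFoldUnions d (dualFam 𝓕),
        ∀ C ∈ dFoldUnions d (dualFam 𝓕),
        A ≠ B → A ≠ C → B ≠ C → A ∩ B ≠ A ∩ C)) := by
  constructor
  · rintro ⟨h1, h2⟩
    refine ⟨?_, ?_, ?_⟩
    · intro G H hG hH hGm hHm hs
      obtain ⟨X, hX, hXs, hXi⟩ := exists_set_of_tuple 𝓕 G hG hGm
      obtain ⟨Y, hY, hYs, hYi⟩ := exists_set_of_tuple 𝓕 H hH hHm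
      rw [hXi, hYi]
      by_cases hXY : X = Y
      · rw [hXY]
      · exfalso
        obtain ⟨F, hF, hFX, hFY⟩ := h1 X Y hX hY hXY
        have h : F ∈ meetFam 𝓕 X := (mem_meetFam _ _ _).2 ⟨hF, hFX⟩
        rw [← hXs, hs, hYs, mem_meetFam, hFY] at h
        simp at h
    · rintro A ⟨G, hG, hGm, rfl⟩ B ⟨H, hH, hHm, rfl⟩ hne hsub
      obtain ⟨X, hX, hXs, -⟩ := exists_set_of_tuple 𝓕 G hG hGm
      obtain ⟨Y, hY, hYs, -⟩ := exists_set_of_tuple 𝓕 H hH hHm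
      rw [hXs, hYs] at hne hsub
      obtain ⟨F, hF, hFX, hFY⟩ := h1 X Y hX hY (fun h => hne (by rw [h]))
      have h := hsub ((mem_meetFam _ _ _).2 ⟨hF, hFX⟩)
      rw [mem_meetFam, hFY] at h
      simp at h
    · rintro A ⟨G, hG, hGm, rfl⟩ B ⟨H, hH, hHm, rfl⟩ C ⟨K, hK, hKm, rfl⟩ hAB hAC hBC he
      obtain ⟨X, hX, hXs, -⟩ := exists_set_of_tuple 𝓕 G hG hGm
      obtain ⟨Y, hY, hYs, -⟩ := exists_set_of_tuple 𝓕 H hH hHm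
      obtain ⟨Z, hZ, hZs, -⟩ := exists_set_of_tuple 𝓕 K hK hKm
      rw [hXs, hYs] at hAB
      rw [hXs, hZs] at hAC
      rw [hYs, hZs] at hBC
      rw [hXs, hYs, hZs] at he
      obtain ⟨F, hF, h⟩ := h2 X Y Z hX hY hZ (fun h => hAB (by rw [h]))
        (fun h => hAC (by rw [h])) (fun h => hBC (by rw [h]))
      have hh := Finset.ext_iff.1 he F
      simp only [Finset.mem_inter, mem_meetFam] at hh
      rcases h with ⟨a, b, c⟩ | ⟨a, b, c⟩
      · have := (hh.1 ⟨⟨hF, a⟩, hF, b⟩).2.2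
        rw [c] at this
        simp at this
      · have := (hh.2 ⟨⟨hF, a⟩, hF, b⟩).2.2
        rw [c] at this
        simp at this
  · rintro ⟨h1, h2, h3⟩
    have hmem : ∀ X : Finset (Fin n), X.card = d →
        meetFam 𝓕 X ∈ dFoldUnions d (dualFam 𝓕) := by
      intro X hX
      obtain ⟨G, hG, hGm, hs, -⟩ := exists_tuple_of_set 𝓕 hdist X hX
      exact ⟨G, hG, hGm, hs.symm⟩
    have hne : ∀ X Y : Finset (Fin n), X.card = d → Y.card = d → X ≠ Y →
        meetFam 𝓕 X ≠ meetFam 𝓕 Y := by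
      intro X Y hX hY hXY he
      obtain ⟨G, hG, hGm, hs, hi⟩ := exists_tuple_of_set 𝓕 hdist X hX
      obtain ⟨H, hH, hHm, ht, hj⟩ := exists_tuple_of_set 𝓕 hdist Y hY
      have := h1 G H hG hH hGm hHm (by rw [hs, ht, he])
      rw [hi, hj] at this
      exact hXY (Finset.image_injective (fun a b h => hdist a b h) this)
    refine ⟨?_, ?_⟩
    · intro X Y hX hY hXY
      have h := h2 _ (hmem X hX) _ (hmem Y hY) (hne X Y hX hY hXY)
      obtain ⟨F, hF, hF'⟩ := Finset.not_subset.1 h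
      rw [mem_meetFam] at hF hF'
      exact ⟨F, hF.1, hF.2, Finset.not_nonempty_iff_eq_empty.1 fun h => hF' ⟨hF.1, h⟩⟩
    · intro X Y Z hX hY hZ hXY hXZ hYZ
      have h := h3 _ (hmem X hX) _ (hmem Y hY) _ (hmem Z hZ) (hne X Y hX hY hXY)
        (hne X Z hX hZ hXZ) (hne Y Z hY hZ hYZ)
      by_contra hcon
      apply h
      ext F
      simp only [Finset.mem_inter, mem_meetFam]
      constructor
      · rintro ⟨⟨hF, a⟩, -, b⟩
        refine ⟨⟨hF, a⟩, hF, ?_⟩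
        by_contra hc
        exact hcon ⟨F, hF, Or.inl ⟨a, b, Finset.not_nonempty_iff_eq_empty.1 hc⟩⟩
      · rintro ⟨⟨hF, a⟩, -, b⟩
        refine ⟨⟨hF, a⟩, hF, ?_⟩
        by_contra hc
        exact hcon ⟨F, hF, Or.inr ⟨a, b, Finset.not_nonempty_iff_eq_empty.1 hc⟩⟩
end

section
/- Let d ≥ 1 and let 𝓕 be a family of subsets of [n] satisfying both: (Model 1_d) for every x ∈ [n] and every D ⊆ [n] with |D| = d and x ∉ D there exists F ∈ 𝓕 with x ∈ F and F ∩ D = ∅; and (Model 2'_d) for every x ∈ [n], every D ⊆ [n] with |D| = d and x ∉ D, and every D' ⊆ [n] with |D'| = d and D' ≠ D, there exists F ∈ 𝓕 with x ∈ F such that exactly one of F ∩ D and F ∩ D' is nonempty. Then 𝓕 satisfies •1 (for any two distinct X, Y ⊆ [n] with |X| = |Y| = d there exists F ∈ 𝓕 with F ∩ X ≠ ∅ and F ∩ Y = ∅) and •2 (for any three pairwise distinct X, Y, Z ⊆ [n] with |X| = |Y| = |Z| = d there exists F ∈ 𝓕 with either (F ∩ X ≠ ∅, F ∩ Y ≠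 ∅ and F ∩ Z = ∅) or (F ∩ X ≠ ∅, F ∩ Z ≠ ∅ and F ∩ Y = ∅)); that is, 𝓕 solves Model 2''_d. -/
/-- if `𝓕` satisfies Model 1_d (every `x` and `d`-set `D` avoiding `x` admit a
query containing `x` disjoint from `D`) and Model 2'_d (every non-defective element can
identify the defectives), then `𝓕` satisfies •1 and •2, i.e. it solves Model 2''_d. -/
theorem model1d_and_model2dprime_implies_model2dsecond (n d : ℕ) (hd : 1 ≤ d)
    (𝓕 : Finset (Finset (Fin n)))
    (hmodel1 : ∀ x : Fin n, ∀ D : Finset (Fin n), D.card = d → x ∉ D →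
      ∃ F ∈ 𝓕, x ∈ F ∧ F ∩ D = ∅)
    (hmodel2 : ∀ x : Fin n, ∀ D : Finset (Fin n), D.card = d → x ∉ D →
      ∀ D' : Finset (Fin n), D'.card = d → D' ≠ D →
        ∃ F ∈ 𝓕, x ∈ F ∧
          (((F ∩ D).Nonempty ∧ ¬ (F ∩ D').Nonempty) ∨
            ((F ∩ D').Nonempty ∧ ¬ (F ∩ D).Nonempty))) :
    (∀ X Y : Finset (Fin n), X.card = d → Y.card = d → X ≠ Y →
      ∃ F ∈ 𝓕, (F ∩ X).Nonempty ∧ F ∩ Y = ∅) ∧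
    (∀ X Y Z : Finset (Fin n), X.card = d → Y.card = d → Z.card = d →
      X ≠ Y → X ≠ Z → Y ≠ Z →
      ∃ F ∈ 𝓕, ((F ∩ X).Nonempty ∧ (F ∩ Y).Nonempty ∧ F ∩ Z = ∅) ∨
        ((F ∩ X).Nonempty ∧ (F ∩ Z).Nonempty ∧ F ∩ Y = ∅)) := by
  have key : ∀ X Y : Finset (Fin n), X.card = d → Y.card = d → X ≠ Y →
      ∃ x ∈ X, x ∉ Y := by
    intro X Y hX hY hne
    by_contra! h
    exact hne (Finset.eq_of_subset_of_card_le h (by omega))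
  constructor
  · intro X Y hX hY hne
    obtain ⟨x, hxX, hxY⟩ := key X Y hX hY hne
    obtain ⟨F, hF, hxF, hFY⟩ := hmodel1 x Y hY hxY
    exact ⟨F, hF, ⟨x, Finset.mem_inter.mpr ⟨hxF, hxX⟩⟩, hFY⟩
  · intro X Y Z hX hY hZ hXY hXZ hYZ
    obtain ⟨x, hxX, hxY⟩ := key X Y hX hY hXY
    obtain ⟨F, hF, hxF, h⟩ := hmodel2 x Y hY hxY Z hZ hYZ.symm
    have hFX : (F ∩ X).Nonempty := ⟨x, Finset.mem_inter.mpr ⟨hxF, hxX⟩⟩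
    refine ⟨F, hF, ?_⟩
    rcases h with ⟨h1, h2⟩ | ⟨h1, h2⟩
    · exact Or.inl ⟨hFX, h1, Finset.not_nonempty_iff_eq_empty.mp h2⟩
    · exact Or.inr ⟨hFX, h1, Finset.not_nonempty_iff_eq_empty.mp h2⟩
end

section
/- For every d-element subset X ⊆ [n], say that X resolves the defectives if for any two distinct D, D' ⊆ [n] with |D| = |D'| = d there exists F ∈ 𝓕 with F ∩ X ≠ ∅ such that exactly one of F ∩ D and F ∩ D' is nonempty. Then a family 𝓕 of subsets of [n] has the property that every d-element subset X ⊆ [n] resolves the defectives if and only if 𝓕 satisfies both •1 (for any two distinct X, Y ⊆ [n] with |X| = |Y| = d there exists F ∈ 𝓕 with F ∩ X ≠ ∅ and F ∩ Y = ∅) and •2 (for any three pairwise distinct X, Y, Z ⊆ [n] with |X| = |Y| = |Z| = d there exists F ∈ 𝓕 with either (F ∩ X ≠ ∅, F ∩ Y ≠ ∅ and F ∩ Z = ∅) or (F ∩ X ≠ ∅, F ∩ Z ≠ ∅ and F ∩ Y = ∅)). -/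
/-- every `d`-element subset `X ⊆ [n]` resolves the defectives (any two
distinct `d`-sets `D, D'` are distinguished by a query meeting `X`) iff `𝓕` satisfies both
•1 and •2. -/
theorem resolves_iff_bullet1_and_bullet2 (n d : ℕ) (𝓕 : Finset (Finset (Fin n))) :
    (∀ X : Finset (Fin n), X.card = d →
      ∀ D D' : Finset (Fin n), D.card = d → D'.card = d → D ≠ D' →
        ∃ F ∈ 𝓕, (F ∩ X).Nonempty ∧
          (((F ∩ D).Nonempty ∧ ¬ (F ∩ D').Nonempty) ∨
            ((F ∩ D').Nonempty ∧ ¬ (F ∩ D).Nonempty))) ↔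
    ((∀ X Y : Finset (Fin n), X.card = d → Y.card = d → X ≠ Y →
        ∃ F ∈ 𝓕, (F ∩ X).Nonempty ∧ F ∩ Y = ∅) ∧
      (∀ X Y Z : Finset (Fin n), X.card = d → Y.card = d → Z.card = d →
        X ≠ Y → X ≠ Z → Y ≠ Z →
        ∃ F ∈ 𝓕, ((F ∩ X).Nonempty ∧ (F ∩ Y).Nonempty ∧ F ∩ Z = ∅) ∨
          ((F ∩ X).Nonempty ∧ (F ∩ Z).Nonempty ∧ F ∩ Y = ∅))) := by
  simp only [Finset.not_nonempty_iff_eq_empty]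
  constructor
  · intro h
    refine ⟨fun X Y hX hY hne => ?_, fun X Y Z hX hY hZ _ _ hYZ => ?_⟩
    · obtain ⟨F, hF, hFX, h1 | h1⟩ := h X hX X Y hX hY hne
      · exact ⟨F, hF, hFX, h1.2⟩
      · exact absurd h1.2 hFX.ne_empty
    · obtain ⟨F, hF, hFX, h1 | h1⟩ := h X hX Y Z hY hZ hYZ
      · exact ⟨F, hF, Or.inl ⟨hFX, h1.1, h1.2⟩⟩
      · exact ⟨F, hF, Or.inr ⟨hFX, h1.1, h1.2⟩⟩
  · rintro ⟨h1, h2⟩ X hX D D' hD hD' hne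
    by_cases hXD : X = D
    · subst hXD
      obtain ⟨F, hF, ha, hb⟩ := h1 X D' hX hD' hne
      exact ⟨F, hF, ha, Or.inl ⟨ha, hb⟩⟩
    by_cases hXD' : X = D'
    · subst hXD'
      obtain ⟨F, hF, ha, hb⟩ := h1 X D hX hD hXD
      exact ⟨F, hF, ha, Or.inr ⟨ha, hb⟩⟩
    obtain ⟨F, hF, ⟨ha, hb⟩ | ⟨ha, hb⟩⟩ := h2 X D D' hX hD hD' hXD hXD' hne
    · exact ⟨F, hF, ha, Or.inl hb⟩
    · exact ⟨F, hF, ha, Or.inr hb⟩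
end

section
/- Let d ≥ 2, r ≥ 3 and n ≥ dr+2. Let 𝓕 be a family of subsets of [n] such that every F ∈ 𝓕 has |F| = r, every x ∈ [n] belongs to exactly d members of 𝓕, any two distinct members of 𝓕 intersect in at most one element, and 𝓕 contains no Berge cycle of length 3 or 4 (i.e. there are no three pairwise distinct E_1, E_2, E_3 ∈ 𝓕 and pairwise distinct x_1, x_2, x_3 ∈ [n] with x_1, x_2 ∈ E_1, x_2, x_3 ∈ E_2, x_3, x_1 ∈ E_3, and no four pairwise distinct E_1, E_2, E_3, E_4 ∈ 𝓕 and pairwise distinct x_1, x_2, x_3, x_4 ∈ [n] with x_1, x_2 ∈ E_1, x_2, x_3 ∈ E_2, x_3, x_4 ∈ E_3, x_4, x_1 ∈ E_4). Then 𝓕 is d-separating and satisfies: for every x ∈ [n], every D ⊆ [n] with |D| = d and every y ∈ D, there exists D' ⊆ [n] with |D'| = d and y ∉ D' such that every F ∈ 𝓕 with x ∈ F satisfies F ∩ D ≠ ∅ if and only if F ∩ D' ≠ ∅. (That is, 𝓕 solves Model 3_d: Questioner can identify the defectives but no single element can identify any of them.) -/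
theorem aux_star {n d : ℕ} (𝓕 : Finset (Finset (Fin n)))
    (hreg : ∀ x : Fin n, (𝓕.filter (fun F => x ∈ F)).card = d)
    (hl : ∀ F ∈ 𝓕, ∀ G ∈ 𝓕, ∀ a b, a ≠ b → a ∈ F → b ∈ F → a ∈ G → b ∈ G → F = G)
    (Y : Finset (Fin n)) (hY : Y.card = d) (x : Fin n) (hx : x ∉ Y)
    (h : ∀ F ∈ 𝓕, x ∈ F → (F ∩ Y).Nonempty) :
    (∀ y ∈ Y, ∃ F ∈ 𝓕, x ∈ F ∧ y ∈ F) ∧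
    (∀ F ∈ 𝓕, x ∈ F → ∀ y ∈ Y, ∀ z ∈ Y, y ∈ F → z ∈ F → y = z) := by
  classical
  have h' : ∀ F : Finset (Fin n), ∃ z, F ∈ 𝓕 → x ∈ F → z ∈ F ∧ z ∈ Y := by
    intro F
    by_cases hF : F ∈ 𝓕 ∧ x ∈ F
    · obtain ⟨z, hz⟩ := h F hF.1 hF.2
      exact ⟨z, fun _ _ => Finset.mem_inter.1 hz⟩
    · exact ⟨x, fun a b => absurd ⟨a, b⟩ hF⟩
  choose g hg using h'
  have himg : (𝓕.filter (fun F => x ∈ F)).image g = Y := by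
    apply Finset.eq_of_subset_of_card_le
    · intro z hz
      obtain ⟨F, hF, rfl⟩ := Finset.mem_image.1 hz
      rw [Finset.mem_filter] at hF
      exact (hg F hF.1 hF.2).2
    · rw [Finset.card_image_of_injOn, hreg, hY]
      intro F hF G hG hFG
      simp only [Finset.coe_filter, Set.mem_setOf_eq] at hF hG
      have h1 := hg F hF.1 hF.2
      have h2 := hg G hG.1 hG.2
      have hne : x ≠ g F := fun e => hx (e ▸ h1.2)
      exact hl F hF.1 G hG.1 x (g F) hne hF.2 h1.1 hG.2 (hFG ▸ h2.1)
  have hs : ∀ y ∈ Y, ∃ F ∈ 𝓕, x ∈ F ∧ y ∈ F ∧ g F = y := by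
    intro y hy
    rw [← himg] at hy
    obtain ⟨F, hF, rfl⟩ := Finset.mem_image.1 hy
    rw [Finset.mem_filter] at hF
    exact ⟨F, hF.1, hF.2, (hg F hF.1 hF.2).1, rfl⟩
  refine ⟨fun y hy => ?_, ?_⟩
  · obtain ⟨F, a, b, c, _⟩ := hs y hy
    exact ⟨F, a, b, c⟩
  · have key : ∀ F ∈ 𝓕, x ∈ F → ∀ y ∈ Y, y ∈ F → g F = y := by
      intro F hF hxF y hy hyF
      obtain ⟨G, a, b, c, e⟩ := hs y hy
      have hne : x ≠ y := fun e => hx (e ▸ hy)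
      rw [hl F hF G a x y hne hxF hyF b c, e]
    intro F hF hxF y hy z hz hyF hzF
    rw [← key F hF hxF y hy hyF, key F hF hxF z hz hzF]

/-- an `r`-uniform, `d`-regular, linear family of subsets of `[n]` with no
Berge cycle of length 3 or 4 (where `d ≥ 2`, `r ≥ 3`, `n ≥ dr+2`) is `d`-separating and
solves Model 3_d: no single element can identify any defective. -/
theorem linear_girth5_solves_model3d (n d r : ℕ) (hd : 2 ≤ d) (hr : 3 ≤ r)
    (hn : d * r + 2 ≤ n)
    (𝓕 : Finset (Finset (Fin n)))
    (hunif : ∀ F ∈ 𝓕, F.card = r)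
    (hreg : ∀ x : Fin n, (𝓕.filter (fun F => x ∈ F)).card = d)
    (hlin : ∀ F ∈ 𝓕, ∀ G ∈ 𝓕, F ≠ G → (F ∩ G).card ≤ 1)
    (hC3 : ¬ ∃ (E₁ E₂ E₃ : Finset (Fin n)) (x₁ x₂ x₃ : Fin n),
      E₁ ∈ 𝓕 ∧ E₂ ∈ 𝓕 ∧ E₃ ∈ 𝓕 ∧
      E₁ ≠ E₂ ∧ E₁ ≠ E₃ ∧ E₂ ≠ E₃ ∧
      x₁ ≠ x₂ ∧ x₁ ≠ x₃ ∧ x₂ ≠ x₃ ∧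
      x₁ ∈ E₁ ∧ x₂ ∈ E₁ ∧ x₂ ∈ E₂ ∧ x₃ ∈ E₂ ∧ x₃ ∈ E₃ ∧ x₁ ∈ E₃)
    (hC4 : ¬ ∃ (E₁ E₂ E₃ E₄ : Finset (Fin n)) (x₁ x₂ x₃ x₄ : Fin n),
      E₁ ∈ 𝓕 ∧ E₂ ∈ 𝓕 ∧ E₃ ∈ 𝓕 ∧ E₄ ∈ 𝓕 ∧
      E₁ ≠ E₂ ∧ E₁ ≠ E₃ ∧ E₁ ≠ E₄ ∧ E₂ ≠ E₃ ∧ E₂ ≠ E₄ ∧ E₃ ≠ E₄ ∧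
      x₁ ≠ x₂ ∧ x₁ ≠ x₃ ∧ x₁ ≠ x₄ ∧ x₂ ≠ x₃ ∧ x₂ ≠ x₄ ∧ x₃ ≠ x₄ ∧
      x₁ ∈ E₁ ∧ x₂ ∈ E₁ ∧ x₂ ∈ E₂ ∧ x₃ ∈ E₂ ∧ x₃ ∈ E₃ ∧ x₄ ∈ E₃ ∧ x₄ ∈ E₄ ∧ x₁ ∈ E₄) :
    (∀ X Y : Finset (Fin n), X.card = d → Y.card = d → X ≠ Y →
      ∃ F ∈ 𝓕, ((F ∩ X).Nonempty ∧ ¬ (F ∩ Y).Nonempty) ∨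
        ((F ∩ Y).Nonempty ∧ ¬ (F ∩ X).Nonempty)) ∧
    (∀ x : Fin n, ∀ D : Finset (Fin n), D.card = d → ∀ y ∈ D,
      ∃ D' : Finset (Fin n), D'.card = d ∧ y ∉ D' ∧
        ∀ F ∈ 𝓕, x ∈ F → ((F ∩ D).Nonempty ↔ (F ∩ D').Nonempty)) := by
  classical
  have hl : ∀ F ∈ 𝓕, ∀ G ∈ 𝓕, ∀ a b, a ≠ b → a ∈ F → b ∈ F → a ∈ G → b ∈ G → F = G := by
    intro F hF G hG a b hab h1 h2 h3 h4
    by_contra hne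
    exact hab (Finset.card_le_one.1 (hlin F hF G hG hne) a (Finset.mem_inter.2 ⟨h1, h3⟩) b
      (Finset.mem_inter.2 ⟨h2, h4⟩))
  constructor
  · intro X Y hX hY hXY
    by_contra hcon
    have hiff : ∀ F ∈ 𝓕, (F ∩ X).Nonempty ↔ (F ∩ Y).Nonempty := by
      intro F hF
      constructor
      · intro h1
        by_contra h2
        exact hcon ⟨F, hF, Or.inl ⟨h1, h2⟩⟩
      · intro h1
        by_contra h2
        exact hcon ⟨F, hF, Or.inr ⟨h1, h2⟩⟩
    have SX : ∀ x ∈ X, x ∉ Y → _ := fun x hx hxY => aux_star 𝓕 hreg hl Y hY x hxY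
      (fun F hF hxF => (hiff F hF).1 ⟨x, Finset.mem_inter.2 ⟨hxF, hx⟩⟩)
    have SY : ∀ x ∈ Y, x ∉ X → _ := fun x hx hxY => aux_star 𝓕 hreg hl X hX x hxY
      (fun F hF hxF => (hiff F hF).2 ⟨x, Finset.mem_inter.2 ⟨hxF, hx⟩⟩)
    by_cases hdis : ∃ z, z ∈ X ∧ z ∈ Y
    · obtain ⟨z, hzX, hzY⟩ := hdis
      obtain ⟨x, hx, hxY⟩ : ∃ x ∈ X, x ∉ Y := by
        by_contra hh
        push Not at hh
        exact hXY (Finset.eq_of_subset_of_card_le hh (by omega))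
      obtain ⟨y, hy, hyX⟩ : ∃ x ∈ Y, x ∉ X := by
        by_contra hh
        push Not at hh
        exact hXY (Finset.eq_of_subset_of_card_le hh (by omega)).symm
      obtain ⟨a1, a2⟩ := SX x hx hxY
      obtain ⟨b1, b2⟩ := SY y hy hyX
      obtain ⟨E1, e1, e2, e3⟩ := a1 y hy
      obtain ⟨E3, f1, f2, f3⟩ := a1 z hzY
      obtain ⟨E2, g1, g2, g3⟩ := b1 z hzX
      have hxy : x ≠ y := fun e => hxY (e ▸ hy)
      have hxz : x ≠ z := fun e => hxY (e ▸ hzY)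
      have hyz : y ≠ z := fun e => hyX (e ▸ hzX)
      refine hC3 ⟨E1, E2, E3, x, y, z, e1, g1, f1, ?_, ?_, ?_, hxy, hxz, hyz, e2, e3, g2, g3, f3, f2⟩
      · rintro rfl
        exact hyz (a2 E1 e1 e2 y hy z hzY e3 g3)
      · rintro rfl
        exact hyz (a2 E1 e1 e2 y hy z hzY e3 f3)
      · rintro rfl
        exact hyz (a2 E2 f1 f2 y hy z hzY g2 f3)
    · push Not at hdis
      obtain ⟨x, hx, x', hx', hxx⟩ := Finset.one_lt_card.1 (show 1 < X.card by omega)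
      obtain ⟨y, hy, y', hy', hyy⟩ := Finset.one_lt_card.1 (show 1 < Y.card by omega)
      have hd' : ∀ a ∈ X, ∀ b ∈ Y, a ≠ b := fun a ha b hb e => hdis a ha (e ▸ hb)
      obtain ⟨a1, a2⟩ := SX x hx (hdis x hx)
      obtain ⟨b1, b2⟩ := SX x' hx' (hdis x' hx')
      obtain ⟨-, c2⟩ := SY y hy (fun h => hdis y h hy)
      obtain ⟨-, d2⟩ := SY y' hy' (fun h => hdis y' h hy')
      obtain ⟨E1, p1, p2, p3⟩ := a1 y hy
      obtain ⟨E2, q1, q2, q3⟩ := b1 y hy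
      obtain ⟨E3, r1, r2, r3⟩ := b1 y' hy'
      obtain ⟨E4, s1, s2, s3⟩ := a1 y' hy'
      refine hC4 ⟨E1, E2, E3, E4, x, y, x', y', p1, q1, r1, s1, ?_, ?_, ?_, ?_, ?_, ?_,
        hd' x hx y hy, hxx, hd' x hx y' hy', (hd' x' hx' y hy).symm, hyy, hd' x' hx' y' hy',
        p2, p3, q3, q2, r2, r3, s3, s2⟩
      · rintro rfl
        exact hxx (c2 E1 p1 p3 x hx x' hx' p2 q2)
      · rintro rfl
        exact hyy (a2 E1 p1 p2 y hy y' hy' p3 r3)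
      · rintro rfl
        exact hyy (a2 E1 p1 p2 y hy y' hy' p3 s3)
      · rintro rfl
        exact hyy (b2 E2 q1 q2 y hy y' hy' q3 r3)
      · rintro rfl
        exact hxx (c2 E2 q1 q3 x hx x' hx' s2 q2)
      · rintro rfl
        exact hxx (d2 E3 r1 r3 x hx x' hx' s2 r2)
  · intro x D hD y hy
    have hc : ∀ F : Finset (Fin n), ∃ c, F ∈ 𝓕 → c ∈ F ∧ c ≠ x ∧ c ≠ y := by
      intro F
      by_cases hF : F ∈ 𝓕
      · have h1 := Finset.pred_card_le_card_erase (s := F) (a := x)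
        have h2 := Finset.pred_card_le_card_erase (s := F.erase x) (a := y)
        have h3 := hunif F hF
        obtain ⟨c, hc⟩ := Finset.card_pos.1 (show 0 < ((F.erase x).erase y).card by omega)
        simp only [Finset.mem_erase] at hc
        exact ⟨c, fun _ => ⟨hc.2.2, hc.2.1, hc.1⟩⟩
      · exact ⟨x, fun h => absurd h hF⟩
    choose c hc using hc
    set P := 𝓕.filter (fun F => x ∈ F) with hP
    set A := (P.filter (fun F => (F ∩ D).Nonempty)).image c with hA
    set U := insert x (P.biUnion (fun F => F.erase x)) with hU
    set O := (Finset.univ \ U).erase y with hO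
    have hAc : A.card ≤ d := by
      calc A.card ≤ _ := Finset.card_image_le
        _ ≤ P.card := Finset.card_filter_le _ _
        _ = d := hreg x
    have hUc : U.card ≤ d * (r - 1) + 1 := by
      refine (Finset.card_insert_le _ _).trans ?_
      have : (P.biUnion (fun F => F.erase x)).card ≤ P.card * (r - 1) := by
        apply Finset.card_biUnion_le_card_mul
        intro F hF
        rw [hP, Finset.mem_filter] at hF
        rw [Finset.card_erase_of_mem hF.2, hunif F hF.1]
      rw [hP, hreg x] at this
      rw [hP]
      omega
    have hOc : d ≤ O.card := by
      have h1 := Finset.pred_card_le_card_erase (s := Finset.univ \ U) (a := y)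
      have h2 := Finset.le_card_sdiff U (Finset.univ : Finset (Fin n))
      rw [Finset.card_univ, Fintype.card_fin] at h2
      obtain ⟨k, rfl⟩ : ∃ k, r = k + 1 := ⟨r - 1, by omega⟩
      rw [Nat.add_sub_cancel] at hUc
      rw [Nat.mul_succ] at hn
      rw [← hO] at h1
      omega
    obtain ⟨D', hAD, hDT, hDc⟩ := Finset.exists_subsuperset_card_eq
      (Finset.subset_union_left (s₁ := A) (s₂ := O)) hAc
      (hOc.trans (Finset.card_le_card Finset.subset_union_right))
    have hmem : ∀ z ∈ D', (∃ G ∈ 𝓕, x ∈ G ∧ (G ∩ D).Nonempty ∧ z = c G) ∨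
        (z ≠ y ∧ z ∉ U) := by
      intro z hz
      rcases Finset.mem_union.1 (hDT hz) with h | h
      · left
        obtain ⟨G, hG, rfl⟩ := Finset.mem_image.1 h
        rw [Finset.mem_filter, hP, Finset.mem_filter] at hG
        exact ⟨G, hG.1.1, hG.1.2, hG.2, rfl⟩
      · right
        rw [hO, Finset.mem_erase, Finset.mem_sdiff] at h
        exact ⟨h.1, h.2.2⟩
    refine ⟨D', hDc, ?_, ?_⟩
    · intro hyD
      rcases hmem y hyD with ⟨G, hG, _, _, e⟩ | h
      · exact (hc G hG).2.2 e.symm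
      · exact h.1 rfl
    · intro F hF hxF
      constructor
      · intro h
        refine ⟨c F, Finset.mem_inter.2 ⟨(hc F hF).1, hAD ?_⟩⟩
        exact Finset.mem_image_of_mem c
          (Finset.mem_filter.2 ⟨Finset.mem_filter.2 ⟨hF, hxF⟩, h⟩)
      · rintro ⟨z, hz⟩
        rw [Finset.mem_inter] at hz
        rcases hmem z hz.2 with ⟨G, hG, hxG, hGD, rfl⟩ | h
        · have := hl F hF G hG x (c G) (hc G hG).2.1.symm hxF hz.1 hxG (hc G hG).1
          rw [this]
          exact hGD
        · exfalso
          apply h.2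
          rw [hU, Finset.mem_insert]
          by_cases hzx : z = x
          · exact Or.inl hzx
          · exact Or.inr (Finset.mem_biUnion.2 ⟨F, Finset.mem_filter.2 ⟨hF, hxF⟩,
              Finset.mem_erase.2 ⟨hzx, hz.1⟩⟩)
end

section
/- For every integer d ≥ 2 there exists n_0 such that for every n ≥ n_0 there is a family 𝓕 of subsets of [n] which is d-separating and satisfies: for every x ∈ [n], every D ⊆ [n] with |D| = d and every y ∈ D, there exists D' ⊆ [n] with |D'| = d and y ∉ D' such that every F ∈ 𝓕 with x ∈ F satisfies F ∩ D ≠ ∅ if and only if F ∩ D' ≠ ∅. (That is, for n large enough compared to d > 1, Model 3_d has a solution.) -/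
namespace Model3d

/-- The combinatorial structure: `p x i` is the query of direction `i` containing `x`. -/
structure Good {n d : ℕ} {Q : Type} (p : Fin n → Fin d → Q) : Prop where
  digon : ∀ x y i j, i ≠ j → p x i = p y i → p x j = p y j → x = y
  tri : ∀ x y z i j k, i ≠ j → j ≠ k → k ≠ i → p x i = p y i → p y j = p z j →
    p z k = p x k → x = y
  quad : ∀ x y z w i j k l, i ≠ j → j ≠ k → k ≠ l → l ≠ i → p x i = p y i → p y j = p z j →
    p z k = p w k → p w l = p x l → x = y ∨ y = z
  line : ∀ i x y, ∃ z, p z i = p x i ∧ z ≠ x ∧ z ≠ y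
  far : ∀ x (D : Finset (Fin n)), D.card = d → ∃ w, w ∉ D ∧ ∀ i, p w i ≠ p x i

theorem sum_bound : ∀ (d : ℕ) (v : Fin d → ℤ), (∀ i, |v i| ≤ 60) →
    |∑ i : Fin d, 100 ^ (i : ℕ) * v i| < 100 ^ d := by
  intro d
  induction d with
  | zero => intro v _; simp
  | succ d ih =>
    intro v hv
    have h1 := ih (fun i => v i.succ) (fun i => hv _)
    have h0 := hv 0
    rw [Fin.sum_univ_succ]
    have : ∑ i : Fin d, (100 : ℤ) ^ ((i.succ : Fin (d+1)) : ℕ) * v i.succ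
        = 100 * ∑ i : Fin d, 100 ^ (i : ℕ) * v i.succ := by
      rw [Finset.mul_sum]
      refine Finset.sum_congr rfl fun i _ => ?_
      rw [Fin.val_succ, pow_succ]; ring
    rw [this, pow_succ]
    simp only [Fin.val_zero, pow_zero, one_mul]
    rw [abs_lt] at *
    rw [abs_le] at h0
    constructor <;> linarith [h1.1, h1.2, h0.1, h0.2, Int.add_one_le_iff.mpr h1.1, Int.add_one_le_iff.mpr h1.2]

theorem sum_zero : ∀ (d : ℕ) (v : Fin d → ℤ), (∀ i, |v i| ≤ 60) →
    ∑ i : Fin d, 100 ^ (i : ℕ) * v i = 0 → ∀ i, v i = 0 := by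
  intro d
  induction d with
  | zero => intro v _ _ i; exact i.elim0
  | succ d ih =>
    intro v hv hs
    have h0 := hv 0
    rw [Fin.sum_univ_succ] at hs
    have : ∑ i : Fin d, (100 : ℤ) ^ ((i.succ : Fin (d+1)) : ℕ) * v i.succ
        = 100 * ∑ i : Fin d, 100 ^ (i : ℕ) * v i.succ := by
      rw [Finset.mul_sum]
      refine Finset.sum_congr rfl fun i _ => ?_
      rw [Fin.val_succ, pow_succ]; ring
    rw [this] at hs
    simp only [Fin.val_zero, pow_zero, one_mul] at hs
    rw [abs_le] at h0
    have h00 : v 0 = 0 := by omega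
    have h1 := ih (fun i => v i.succ) (fun i => hv _) (by omega)
    intro i
    refine Fin.cases h00 h1 i

theorem sum_zmod {d m : ℕ} (hm : 100 ^ d ≤ m) (v : Fin d → ℤ) (hv : ∀ i, |v i| ≤ 60)
    (h : ((∑ i : Fin d, 100 ^ (i : ℕ) * v i : ℤ) : ZMod m) = 0) : ∀ i, v i = 0 := by
  apply sum_zero d v hv
  rw [ZMod.intCast_zmod_eq_zero_iff_dvd] at h
  refine Int.eq_zero_of_abs_lt_dvd h ((sum_bound d v hv).trans_le ?_)
  exact_mod_cast hm

theorem sum_single {d : ℕ} (i : Fin d) (a : ℤ) :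
    ∑ j : Fin d, 100 ^ (j : ℕ) * (Pi.single i a : Fin d → ℤ) j = 100 ^ (i : ℕ) * a := by
  rw [Finset.sum_eq_single i]
  · simp
  · intro b _ hb; simp [hb]
  · simp

/-- The label of type `s` differences. -/
def df (s s' : Fin 5) : ℤ := 2 ^ (s : ℕ) - 2 ^ (s' : ℕ)

theorem df_bound : ∀ s s', |df s s'| ≤ 15 := by decide
theorem df_zero : ∀ s s', df s s' = 0 → s = s' := by decide
theorem df_sidon : ∀ a b c e, df a b + df c e = 0 → a = b ∨ (b = c ∧ a = e) := by decide

theorem single_bound {d : ℕ} (i j : Fin d) (s s' : Fin 5) :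
    |(Pi.single i (df s s') : Fin d → ℤ) j| ≤ 15 := by
  by_cases h : j = i
  · subst h; simpa using df_bound s s'
  · simp [h]

/-- The labelling. -/
def lab (m d : ℕ) (q : ZMod m × Fin 5) (i : Fin d) : ZMod m := q.1 + 100 ^ (i : ℕ) * 2 ^ (q.2 : ℕ)

theorem lab_eq {m d : ℕ} {a b : ZMod m × Fin 5} {i : Fin d} (h : lab m d a i = lab m d b i) :
    ((∑ j : Fin d, 100 ^ (j : ℕ) * (Pi.single i (df a.2 b.2) : Fin d → ℤ) j : ℤ) : ZMod m)
      = b.1 - a.1 := by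
  rw [sum_single]
  unfold lab at h
  simp only [df]
  push_cast
  linear_combination h

theorem lab_inj {m d : ℕ} {a b : ZMod m × Fin 5} {i : Fin d} (h : lab m d a i = lab m d b i)
    (hs : a.2 = b.2) : a = b := by
  unfold lab at h
  rw [hs] at h
  exact Prod.ext (add_right_cancel h) hs

theorem lab_quad {m d : ℕ} (hm : 100 ^ d ≤ m) (x y z w : ZMod m × Fin 5) (i j k l : Fin d)
    (hx : lab m d x i = lab m d y i) (hy : lab m d y j = lab m d z j)
    (hz : lab m d z k = lab m d w k) (hw : lab m d w l = lab m d x l) (t : Fin d) :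
    (Pi.single i (df x.2 y.2) : Fin d → ℤ) t + (Pi.single j (df y.2 z.2) : Fin d → ℤ) t
    + (Pi.single k (df z.2 w.2) : Fin d → ℤ) t + (Pi.single l (df w.2 x.2) : Fin d → ℤ) t = 0 := by
  refine sum_zmod hm (fun t => (Pi.single i (df x.2 y.2) : Fin d → ℤ) t
    + (Pi.single j (df y.2 z.2) : Fin d → ℤ) t
    + (Pi.single k (df z.2 w.2) : Fin d → ℤ) t
    + (Pi.single l (df w.2 x.2) : Fin d → ℤ) t) ?_ ?_ t
  · intro t
    have h1 := abs_le.mp (single_bound i t x.2 y.2)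
    have h2 := abs_le.mp (single_bound j t y.2 z.2)
    have h3 := abs_le.mp (single_bound k t z.2 w.2)
    have h4 := abs_le.mp (single_bound l t w.2 x.2)
    rw [abs_le]
    constructor <;> linarith [h1.1, h2.1, h3.1, h4.1, h1.2, h2.2, h3.2, h4.2]
  · simp only [mul_add, Finset.sum_add_distrib]
    rw [Int.cast_add, Int.cast_add, Int.cast_add, lab_eq hx, lab_eq hy, lab_eq hz, lab_eq hw]
    ring

theorem df_self (s : Fin 5) : df s s = 0 := by simp [df]

theorem exists_good {n d : ℕ} (hn : 3 * 100 ^ d + 6 * d + 3 ≤ n) :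
    ∃ (m : ℕ) (_ : NeZero m) (p : Fin n → Fin d → ZMod m), Good p := by
  obtain ⟨m, r, hr, hnm⟩ : ∃ m r, r < 3 ∧ n = 3 * m + r := ⟨n / 3, n % 3, by omega, by omega⟩
  have hm : 100 ^ d ≤ m := by omega
  have hm0 : NeZero m := ⟨by have : 0 < 100 ^ d := by positivity
                             omega⟩
  let P := (ZMod m × Fin 3) ⊕ Fin r
  have hcard : Fintype.card P = n := by
    simp [P, ZMod.card]; omega
  let e : Fin n ≃ P := (Fintype.equivFinOfCardEq hcard).symm
  let c : P → ZMod m × Fin 5 := fun q => match q with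
    | Sum.inl (t, s) => (t, ⟨s, by omega⟩)
    | Sum.inr k => (0, ⟨3 + k, by omega⟩)
  have hc : Function.Injective c := by
    rintro (⟨t, s⟩ | k) (⟨t', s'⟩ | k') h <;> simp only [c, Prod.mk.injEq, Fin.mk.injEq] at h
    · simp [h.1, Fin.ext h.2]
    · omega
    · omega
    · congr 1; ext; omega
  let f : Fin n → ZMod m × Fin 5 := fun x => c (e x)
  have hf : Function.Injective f := hc.comp e.injective
  refine ⟨m, hm0, fun x => lab m d (f x), ?_, ?_, ?_, ?_, ?_⟩
  · intro x y i j hij hi hj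
    have := lab_quad hm (f x) (f y) (f x) (f x) i j i i hi hj.symm rfl rfl i
    simp [hij, df_self] at this
    exact hf (lab_inj hi (df_zero _ _ this))
  · intro x y z i j k hij hjk hki hi hj hk
    have := lab_quad hm (f x) (f y) (f z) (f x) i j k i hi hj hk rfl i
    simp [hij, hki.symm, df_self] at this
    exact hf (lab_inj hi (df_zero _ _ this))
  · intro x y z w i j k l hij hjk hkl hli hi hj hk hl
    have H := lab_quad hm (f x) (f y) (f z) (f w) i j k l hi hj hk hl
    have := H i
    by_cases hik : i = k
    · subst hik
      simp [hij, hli.symm] at this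
      rcases df_sidon _ _ _ _ this with h | ⟨h, -⟩
      · exact Or.inl (hf (lab_inj hi h))
      · exact Or.inr (hf (lab_inj hj h))
    · simp [hij, hli.symm, hik] at this
      exact Or.inl (hf (lab_inj hi (df_zero _ _ this)))
  · intro i x y
    obtain ⟨s, hs1, hs2⟩ : ∃ s : Fin 3, (s : ℕ) ≠ (f x).2 ∧ (s : ℕ) ≠ (f y).2 := by
      generalize (f x).2 = a
      generalize (f y).2 = b
      revert a b; decide
    let z : Fin n := e.symm (Sum.inl (lab m d (f x) i - 100 ^ (i : ℕ) * 2 ^ (s : ℕ), s))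
    have hz : f z = (lab m d (f x) i - 100 ^ (i : ℕ) * 2 ^ (s : ℕ), ⟨s, by omega⟩) := by
      simp [f, z, c]
    refine ⟨z, ?_, ?_, ?_⟩
    · simp only [hz]
      simp [lab]
    · intro h; apply hs1; rw [← h, hz]
    · intro h; apply hs2; rw [← h, hz]
  · intro x D hD
    by_contra! hcon
    have hsub : (Finset.univ : Finset (Fin n)) ⊆ D ∪ Finset.univ.biUnion
        (fun i : Fin d => Finset.univ.filter (fun w => lab m d (f w) i = lab m d (f x) i)) := by
      intro w _
      by_cases hw : w ∈ D
      · simp [hw]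
      · obtain ⟨i, hi⟩ := hcon w hw
        simp only [Finset.mem_union, Finset.mem_biUnion, Finset.mem_univ, true_and,
          Finset.mem_filter]
        exact Or.inr ⟨i, hi⟩
    have h1 := (Finset.card_le_card hsub).trans (Finset.card_union_le _ _)
    have h2 := Finset.card_biUnion_le_card_mul Finset.univ
      (fun i : Fin d => Finset.univ.filter (fun w => lab m d (f w) i = lab m d (f x) i)) 5 (by
        intro i _
        have := Finset.card_le_card_of_injOn (s := Finset.univ.filter
          (fun w => lab m d (f w) i = lab m d (f x) i)) (t := (Finset.univ : Finset (Fin 5)))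
          (fun w => (f w).2) (by intro w _; simp) (by
            intro a ha b hb hab
            simp only [Finset.coe_filter, Finset.mem_univ, true_and, Set.mem_ofPred_eq] at ha hb
            exact hf (lab_inj (ha.trans hb.symm) hab))
        simpa using this)
    simp only [Finset.card_univ, Fintype.card_fin] at h1 h2
    omega

theorem cover {n d : ℕ} {Q : Type} {p : Fin n → Fin d → Q} (hp : Good p)
    {X Y : Finset (Fin n)} (hY : Y.card = d)
    (h : ∀ x ∈ X, ∀ i, ∃ y ∈ Y, p y i = p x i) (x : Fin n) (hx : x ∈ X) (hxY : x ∉ Y) :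
    ∃ f : Fin d → Fin n, Function.Injective f ∧ (∀ i, p x i = p (f i) i) ∧ (∀ i, f i ∈ Y) ∧
      ∀ y ∈ Y, ∃ i, f i = y := by
  choose f hfY hf using h x hx
  have hinj : Function.Injective f := by
    intro i j hij
    by_contra hne
    have := hp.digon x (f i) i j hne (hf i).symm (by rw [hij]; exact (hf j).symm)
    exact hxY (this ▸ hfY i)
  refine ⟨f, hinj, fun i => (hf i).symm, hfY, ?_⟩
  have : Finset.univ.image f = Y := by
    apply Finset.eq_of_subset_of_card_le
    · intro y hy
      obtain ⟨i, -, rfl⟩ := Finset.mem_image.mp hy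
      exact hfY i
    · rw [Finset.card_image_of_injective _ hinj]; simp [hY]
  intro y hy
  rw [← this] at hy
  simpa using hy

theorem no_common {n d : ℕ} {Q : Type} {p : Fin n → Fin d → Q} (hp : Good p)
    {X Y : Finset (Fin n)} (hX : X.card = d) (hY : Y.card = d)
    (h : ∀ x ∈ X, ∀ i, ∃ y ∈ Y, p y i = p x i) (h' : ∀ y ∈ Y, ∀ i, ∃ x ∈ X, p x i = p y i)
    (x y z : Fin n) (hx : x ∈ X) (hxY : x ∉ Y) (hy : y ∈ Y) (hyX : y ∉ X)
    (hzX : z ∈ X) (hzY : z ∈ Y) : False := by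
  obtain ⟨f, finj, hf, -, fs⟩ := cover hp hY h x hx hxY
  obtain ⟨g, ginj, hg, -, gs⟩ := cover hp hX h' y hy hyX
  have hxy : x ≠ y := by rintro rfl; exact hxY hy
  obtain ⟨i, rfl⟩ := fs y hy
  obtain ⟨j, rfl⟩ := fs z hzY
  obtain ⟨i', hi'⟩ := gs x hx
  obtain ⟨k, hk⟩ := gs (f j) hzX
  have hii : i' = i := by
    by_contra hne
    refine hxy (hp.digon x (f i) i' i hne ?_ (hf i))
    have := hg i'
    rw [hi'] at this; exact this.symm
  subst hii
  have hij : i' ≠ j := by rintro rfl; exact hyX hzX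
  have hik : i' ≠ k := by
    rintro rfl
    rw [hi'] at hk
    exact hxY (hk ▸ hzY)
  have h1 := hg k
  rw [hk] at h1
  by_cases hkj : k = j
  · subst hkj
    exact hxy (hp.digon x (f i') i' k hik (hf i') ((hf k).trans h1.symm))
  · exact hxy (hp.tri x (f i') (f j) i' k j hik hkj hij.symm (hf i') h1 (hf j).symm)

theorem separating {n d : ℕ} (hd : 2 ≤ d) {Q : Type} {p : Fin n → Fin d → Q} (hp : Good p)
    {X Y : Finset (Fin n)} (hX : X.card = d) (hY : Y.card = d) (hXY : X ≠ Y)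
    (h : ∀ x ∈ X, ∀ i, ∃ y ∈ Y, p y i = p x i) (h' : ∀ y ∈ Y, ∀ i, ∃ x ∈ X, p x i = p y i) :
    False := by
  obtain ⟨x, hx, hxY⟩ : ∃ x ∈ X, x ∉ Y := by
    by_contra! hc
    exact hXY (Finset.eq_of_subset_of_card_le hc (by omega))
  obtain ⟨y, hy, hyX⟩ : ∃ y ∈ Y, y ∉ X := by
    by_contra! hc
    exact hXY (Finset.eq_of_subset_of_card_le hc (by omega)).symm
  obtain ⟨x', hx', hxx⟩ := Finset.exists_mem_ne (by omega : 1 < X.card) x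
  obtain ⟨y', hy', hyy⟩ := Finset.exists_mem_ne (by omega : 1 < Y.card) y
  by_cases hxY' : x' ∈ Y
  · exact no_common hp hX hY h h' x y x' hx hxY hy hyX hx' hxY'
  by_cases hyX' : y' ∈ X
  · exact no_common hp hX hY h h' x y y' hx hxY hy hyX hyX' hy'
  have key : ∀ a ∈ X, a ∉ Y → ∃ i j, i ≠ j ∧ p a i = p y i ∧ p a j = p y' j := by
    intro a ha haY
    obtain ⟨f, finj, hf, -, fs⟩ := cover hp hY h a ha haY
    obtain ⟨i, hi⟩ := fs y hy
    obtain ⟨j, hj⟩ := fs y' hy'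
    refine ⟨i, j, ?_, hi ▸ hf i, hj ▸ hf j⟩
    rintro rfl
    exact hyy (hj.symm.trans hi)
  have key' : ∀ b ∈ Y, b ∉ X → ∃ i j, i ≠ j ∧ p b i = p x i ∧ p b j = p x' j := by
    intro a ha haY
    obtain ⟨f, finj, hf, -, fs⟩ := cover hp hX h' a ha haY
    obtain ⟨i, hi⟩ := fs x hx
    obtain ⟨j, hj⟩ := fs x' hx'
    refine ⟨i, j, ?_, hi ▸ hf i, hj ▸ hf j⟩
    rintro rfl
    exact hxx (hj.symm.trans hi)
  have uniq : ∀ a ∈ X, a ∉ Y → ∀ b ∈ Y, ∀ i j, p a i = p b i → p b j = p a j → i = j := by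
    intro a ha haY b hb i j hi hj
    by_contra hne
    exact haY ((hp.digon a b i j hne hi hj.symm) ▸ hb)
  obtain ⟨i, j, hij, hi, hj⟩ := key x hx hxY
  obtain ⟨k, l, hkl, hk, hl⟩ := key x' hx' hxY'
  obtain ⟨i', k', hik, hi', hk'⟩ := key' y hy hyX
  obtain ⟨j', l', hjl, hj', hl'⟩ := key' y' hy' hyX'
  obtain rfl := uniq x hx hxY y hy i i' hi hi'
  obtain rfl := uniq x hx hxY y' hy' j j' hj hj'
  obtain rfl := uniq x' hx' hxY' y hy k k' hk hk'
  obtain rfl := uniq x' hx' hxY' y' hy' l l' hl hl'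
  rcases hp.quad x y x' y' i k l j hik hkl hjl.symm hij.symm hi hk' hl hj.symm with e | e
  · exact hxY (e ▸ hy)
  · exact hyX (e ▸ hx')

theorem card_swap {n d : ℕ} {D : Finset (Fin n)} (hD : D.card = d) {y w : Fin n} (hy : y ∈ D)
    (hw : w ∉ D) : (insert w (D.erase y)).card = d := by
  rw [Finset.card_insert_of_notMem (fun h => hw (Finset.mem_of_mem_erase h)),
    Finset.card_erase_of_mem hy]
  have := Finset.card_pos.mpr ⟨y, hy⟩
  omega

theorem hide_swap {n d : ℕ} (hdn : d < n) {Q : Type} {p : Fin n → Fin d → Q}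
    (hp : Good p) (x : Fin n) (D : Finset (Fin n)) (hD : D.card = d) (y : Fin n) (hy : y ∈ D) :
    ∃ D' : Finset (Fin n), D'.card = d ∧ y ∉ D' ∧
      ∀ i, (∃ u ∈ D, p u i = p x i) ↔ (∃ u ∈ D', p u i = p x i) := by
  obtain ⟨w, hwD, hw⟩ := hp.far x D hD
  have hwy : y ≠ w := by rintro rfl; exact hwD hy
  by_cases hxD : x ∈ D
  · by_cases hxy : x = y
    · subst hxy
      choose z hz1 hz2 _ using fun i => hp.line i x x
      obtain ⟨D', h1, h2, h3⟩ := Finset.exists_subsuperset_card_eq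
        (s := Finset.univ.image z) (t := Finset.univ.erase x) (n := d)
        (by intro a ha
            obtain ⟨i, -, rfl⟩ := Finset.mem_image.mp ha
            simp [hz2 i])
        (Finset.card_image_le.trans (by simp))
        (by rw [Finset.card_erase_of_mem (Finset.mem_univ _)]; simp; omega)
      refine ⟨D', h3, fun h => by simpa using h2 h, fun i => ⟨fun _ => ?_, fun _ => ⟨x, hxD, rfl⟩⟩⟩
      exact ⟨z i, h1 (Finset.mem_image_of_mem _ (Finset.mem_univ _)), hz1 i⟩
    · refine ⟨insert w (D.erase y), card_swap hD hy hwD, by simp [hwy], fun i => ?_⟩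
      exact ⟨fun _ => ⟨x, by simp [hxy, hxD], rfl⟩, fun _ => ⟨x, hxD, rfl⟩⟩
  · have hyx : y ≠ x := by rintro rfl; exact hxD hy
    by_cases hc : ∃ i, p y i = p x i ∧ ∀ u ∈ D, u ≠ y → p u i ≠ p x i
    · obtain ⟨i, hi, hu⟩ := hc
      obtain ⟨z, hz, hzx, hzy⟩ := hp.line i x y
      have hzD : z ∉ D := fun h => hu z h hzy hz
      refine ⟨insert z (D.erase y), card_swap hD hy hzD, by simp [hzy.symm], fun j => ?_⟩
      by_cases hij : i = j
      · subst hij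
        exact ⟨fun _ => ⟨z, by simp, hz⟩, fun _ => ⟨y, hy, hi⟩⟩
      · constructor
        · rintro ⟨u, huD, huj⟩
          have : u ≠ y := by
            rintro rfl
            exact hyx (hp.digon _ _ i j hij hi huj)
          exact ⟨u, by simp [this, huD], huj⟩
        · rintro ⟨u, huD, huj⟩
          rcases Finset.mem_insert.mp huD with rfl | hu'
          · exact absurd (hp.digon _ _ i j hij hz huj) hzx
          · exact ⟨u, Finset.mem_of_mem_erase hu', huj⟩
    · push Not at hc
      refine ⟨insert w (D.erase y), card_swap hD hy hwD, by simp [hwy], fun j => ?_⟩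
      constructor
      · rintro ⟨u, huD, huj⟩
        by_cases huy : u = y
        · subst huy
          obtain ⟨v, hvD, hvy, hv⟩ := hc j huj
          exact ⟨v, by simp [hvy, hvD], hv⟩
        · exact ⟨u, by simp [huy, huD], huj⟩
      · rintro ⟨u, huD, huj⟩
        rcases Finset.mem_insert.mp huD with rfl | hu'
        · exact absurd huj (hw j)
        · exact ⟨u, Finset.mem_of_mem_erase hu', huj⟩

end Model3d


/-- for every `d ≥ 2` and all sufficiently large `n`, Model 3_d has a solution:
a `d`-separating family of subsets of `[n]` such that no single element can identify any
defective. -/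
theorem exists_solution_model3d (d : ℕ) (hd : 2 ≤ d) :
    ∃ n₀ : ℕ, ∀ n : ℕ, n₀ ≤ n →
      ∃ 𝓕 : Finset (Finset (Fin n)),
        (∀ X Y : Finset (Fin n), X.card = d → Y.card = d → X ≠ Y →
          ∃ F ∈ 𝓕, ((F ∩ X).Nonempty ∧ ¬ (F ∩ Y).Nonempty) ∨
            ((F ∩ Y).Nonempty ∧ ¬ (F ∩ X).Nonempty)) ∧
        (∀ x : Fin n, ∀ D : Finset (Fin n), D.card = d → ∀ y ∈ D,
          ∃ D' : Finset (Fin n), D'.card = d ∧ y ∉ D' ∧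
            ∀ F ∈ 𝓕, x ∈ F → ((F ∩ D).Nonempty ↔ (F ∩ D').Nonempty)) := by

  refine ⟨3 * 100 ^ d + 6 * d + 3, fun n hn => ?_⟩
  obtain ⟨m, hm0, p, hp⟩ := Model3d.exists_good hn
  let Fq : Fin d × ZMod m → Finset (Fin n) := fun q => Finset.univ.filter (fun x => p x q.1 = q.2)
  have hne : ∀ (q : Fin d × ZMod m) (X : Finset (Fin n)),
      (Fq q ∩ X).Nonempty ↔ ∃ u ∈ X, p u q.1 = q.2 := by
    intro q X
    constructor
    · rintro ⟨u, hu⟩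
      simp only [Fq, Finset.mem_inter, Finset.mem_filter, Finset.mem_univ, true_and] at hu
      exact ⟨u, hu.2, hu.1⟩
    · rintro ⟨u, hu, h⟩
      exact ⟨u, by simp [Fq, hu, h]⟩
  refine ⟨Finset.univ.image Fq, ?_, ?_⟩
  · intro X Y hX hY hXY
    by_contra! hcon
    have hq : ∀ q, Fq q ∈ Finset.univ.image Fq := fun q =>
      Finset.mem_image_of_mem _ (Finset.mem_univ _)
    refine Model3d.separating hd hp hX hY hXY ?_ ?_
    · intro x hx i
      exact (hne (i, p x i) Y).mp ((hcon _ (hq _)).1 ((hne (i, p x i) X).mpr ⟨x, hx, rfl⟩))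
    · intro x hx i
      exact (hne (i, p x i) X).mp ((hcon _ (hq _)).2 ((hne (i, p x i) Y).mpr ⟨x, hx, rfl⟩))
  · intro x D hD y hy
    obtain ⟨D', h1, h2, h3⟩ := Model3d.hide_swap (by omega) hp x D hD y hy
    refine ⟨D', h1, h2, ?_⟩
    intro F hF hxF
    obtain ⟨⟨i, v⟩, -, rfl⟩ := Finset.mem_image.mp hF
    have hv : p x i = v := by simpa [Fq] using hxF
    subst hv
    rw [hne, hne]
    exact h3 i
end

section
/- Let 1 ≤ d ≤ n−1, d ≤ i ≤ n, and let 𝓕 be a d-separating family of subsets of [n]. Then it is not the case that every S ⊆ [n] with |S| = i does not know any defective; i.e., there exists an i-element set S, a set D ⊆ [n] with |D| = d and an element y ∈ D such that for every D' ⊆ [n] with |D'| = d and y ∉ D' there is F ∈ 𝓕 with F ∩ S ≠ ∅ for which exactly one of F ∩ D and F ∩ D' is nonempty. -/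
/-- if `1 ≤ d ≤ n-1`, `d ≤ i ≤ n` and `𝓕` is `d`-separating, then it is not
the case that every `i`-element set does not know any defective: there exist an `i`-element
set `S`, a `d`-set `D` and `y ∈ D` such that for every `d`-set `D'` avoiding `y` some query
intersecting `S` distinguishes `D` from `D'`. -/
theorem i_ge_d_some_set_knows (n d i : ℕ) (hd : 1 ≤ d) (hdn : d ≤ n - 1)
    (hdi : d ≤ i) (hin : i ≤ n)
    (𝓕 : Finset (Finset (Fin n)))
    (hsep : ∀ X Y : Finset (Fin n), X.card = d → Y.card = d → X ≠ Y →
      ∃ F ∈ 𝓕, ((F ∩ X).Nonempty ∧ ¬ (F ∩ Y).Nonempty) ∨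
        ((F ∩ Y).Nonempty ∧ ¬ (F ∩ X).Nonempty)) :
    ∃ S : Finset (Fin n), S.card = i ∧
      ∃ D : Finset (Fin n), D.card = d ∧
        ∃ y ∈ D, ∀ D' : Finset (Fin n), D'.card = d → y ∉ D' →
          ∃ F ∈ 𝓕, (F ∩ S).Nonempty ∧
            (((F ∩ D).Nonempty ∧ ¬ (F ∩ D').Nonempty) ∨
              ((F ∩ D').Nonempty ∧ ¬ (F ∩ D).Nonempty)) := by
  classical
  -- choose a `d`-set `D` hitting the maximum number of queries
  have hne : (Finset.powersetCard d (Finset.univ : Finset (Fin n))).Nonempty := by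
    apply Finset.powersetCard_nonempty.mpr
    simp only [Finset.card_univ, Fintype.card_fin]
    omega
  obtain ⟨D, hD, hmax⟩ := Finset.exists_max_image
    (Finset.powersetCard d (Finset.univ : Finset (Fin n)))
    (fun X => (𝓕.filter (fun F => (F ∩ X).Nonempty)).card) hne
  have hDc : D.card = d := (Finset.mem_powersetCard.mp hD).2
  obtain ⟨S, hDS, hS⟩ := Finset.exists_superset_card_eq (s := D) (n := i)
    (by omega) (by simpa using hin)
  have hy : D.Nonempty := Finset.card_pos.mp (by omega)
  obtain ⟨y, hy⟩ := hy
  refine ⟨S, hS, D, hDc, y, hy, ?_⟩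
  intro D' hD' hyD'
  by_contra hcon
  have hsub : 𝓕.filter (fun F => (F ∩ D).Nonempty) ⊆ 𝓕.filter (fun F => (F ∩ D').Nonempty) := by
    intro F hF
    rw [Finset.mem_filter] at hF ⊢
    refine ⟨hF.1, ?_⟩
    by_contra hn
    exact hcon ⟨F, hF.1, hF.2.mono (Finset.inter_subset_inter_left hDS), Or.inl ⟨hF.2, hn⟩⟩
  have heq := Finset.eq_of_subset_of_card_le hsub
    (hmax D' (Finset.mem_powersetCard.mpr ⟨Finset.subset_univ _, hD'⟩))
  have hDD : D ≠ D' := by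
    rintro rfl
    exact hyD' hy
  obtain ⟨F, hF, h⟩ := hsep D D' hDc hD' hDD
  have hiff := Finset.ext_iff.mp heq F
  simp only [Finset.mem_filter, hF, true_and] at hiff
  tauto
end

section
/- Let 1 ≤ d ≤ n−1. Then there is no family 𝓕 of subsets of [n] such that simultaneously every S ⊆ [n] with |S| = d knows the defectives and every singleton {x} (x ∈ [n]) does not know any defective. (That is, Model 4_d has no solution when j = d.) -/
/-- for `1 ≤ d ≤ n-1` there is no family `𝓕` of subsets of `[n]` such that
every `d`-element set knows the defectives while no singleton knows any defective
(Model 4_d has no solution when `j = d`). -/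
theorem no_solution_j_eq_d (n d : ℕ) (hd : 1 ≤ d) (hdn : d ≤ n - 1) :
    ¬ ∃ 𝓕 : Finset (Finset (Fin n)),
      (∀ S : Finset (Fin n), S.card = d →
        ∀ D D' : Finset (Fin n), D.card = d → D'.card = d → D ≠ D' →
          ∃ F ∈ 𝓕, (F ∩ S).Nonempty ∧
            (((F ∩ D).Nonempty ∧ ¬ (F ∩ D').Nonempty) ∨
              ((F ∩ D').Nonempty ∧ ¬ (F ∩ D).Nonempty))) ∧
      (∀ x : Fin n, ∀ D : Finset (Fin n), D.card = d → ∀ y ∈ D,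
        ∃ D' : Finset (Fin n), D'.card = d ∧ y ∉ D' ∧
          ∀ F ∈ 𝓕, (F ∩ {x}).Nonempty →
            ((F ∩ D).Nonempty ↔ (F ∩ D').Nonempty)) := by
  rintro ⟨𝓕, hknow, hnot⟩
  have hn : d ≤ n := by omega
  -- some `d`-element set containing an element `y`
  obtain ⟨D, -, hD⟩ := Finset.exists_subset_card_eq
    (s := (Finset.univ : Finset (Fin n))) (n := d) (by simpa using hn)
  obtain ⟨y, hy⟩ : D.Nonempty := by
    rw [← Finset.card_pos]; omega
  obtain ⟨D', hD', hyD', hF⟩ := hnot y D hD y hy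
  obtain ⟨z, hz⟩ : D'.Nonempty := by
    rw [← Finset.card_pos]; omega
  -- exchange `z` for `y` in `D'`
  have hcard : (insert y (D'.erase z)).card = d := by
    rw [Finset.card_insert_of_notMem (fun h => hyD' (Finset.mem_of_mem_erase h)),
      Finset.card_erase_of_mem hz]
    omega
  have hne : insert y (D'.erase z) ≠ D' := fun h =>
    hyD' (h ▸ Finset.mem_insert_self y (D'.erase z))
  obtain ⟨F, hFm, hFS, h⟩ := hknow _ hcard _ D' hcard hD' hne
  rcases h with ⟨-, h2⟩ | ⟨-, h2⟩
  · obtain ⟨w, hw⟩ := hFS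
    rw [Finset.mem_inter, Finset.mem_insert] at hw
    obtain ⟨hwF, rfl | hw⟩ := hw
    · exact h2 ((hF F hFm ⟨w, by simp [hwF]⟩).1 ⟨w, Finset.mem_inter.2 ⟨hwF, hy⟩⟩)
    · exact h2 ⟨w, Finset.mem_inter.2 ⟨hwF, Finset.mem_of_mem_erase hw⟩⟩
  · exact h2 hFS
end

section
/- For every integer d ≥ 1 and every integer n ≥ 1 there exists a d-union-free family 𝓕 of subsets of [n] with |𝓕| ≥ (1/2)·(1 + 1/(16 d²))^n. -/
/-- Greedy (Gilbert–Varshamov) selection. -/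
theorem greedy_code {α : Type*} [Fintype α] [DecidableEq α] (R : α → α → Prop)
    (hrefl : ∀ a, R a a) (hsymm : ∀ a b, R a b → R b a) :
    ∃ C : Finset α, (∀ a ∈ C, ∀ b ∈ C, a ≠ b → ¬ R a b) ∧ ∀ a, ∃ b ∈ C, R b a := by
  classical
  obtain ⟨C, hC, hmax⟩ := Finset.exists_max_image
    ((Finset.univ : Finset (Finset α)).filter
      (fun C => ∀ a ∈ C, ∀ b ∈ C, a ≠ b → ¬ R a b)) Finset.card ⟨∅, by simp⟩
  simp only [Finset.mem_filter, Finset.mem_univ, true_and] at hC hmax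
  refine ⟨C, hC, fun a => ?_⟩
  by_contra! hcon
  have haC : a ∉ C := fun h => hcon a h (hrefl a)
  have := hmax (insert a C) (by
    intro x hx y hy hxy hR
    rw [Finset.mem_insert] at hx hy
    rcases hx with rfl | hx <;> rcases hy with rfl | hy
    · exact hxy rfl
    · exact hcon y hy (hsymm _ _ hR)
    · exact hcon x hx hR
    · exact hC x hx y hy hxy hR)
  rw [Finset.card_insert_of_notMem haC] at this
  omega

/-- Number of agreements of two words. -/
def agr {k q : ℕ} (f g : Fin k → Fin q) : ℕ := (Finset.univ.filter (fun i => f i = g i)).card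

theorem sum_exp_agr {k q : ℕ} (f : Fin k → Fin q) :
    ∑ g : Fin k → Fin q, Real.exp (agr f g) = (Real.exp 1 + (q - 1 : ℝ)) ^ k := by
  have h1 : ∀ g : Fin k → Fin q,
      Real.exp (agr f g) = ∏ i, (if f i = g i then Real.exp 1 else 1) := by
    intro g
    rw [Finset.prod_ite]
    simp [agr, ← Real.exp_nat_mul]
  simp_rw [h1]
  rw [← Fintype.prod_sum (fun i (a : Fin q) => if f i = a then Real.exp 1 else (1 : ℝ))]
  have h2 : ∀ i, ∑ a : Fin q, (if f i = a then Real.exp 1 else (1 : ℝ))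
      = Real.exp 1 + (q - 1 : ℝ) := by
    intro i
    have : ∀ a : Fin q, (if f i = a then Real.exp 1 else (1 : ℝ))
        = 1 + (if f i = a then Real.exp 1 - 1 else 0) := by
      intro a; split_ifs <;> ring
    simp_rw [this, Finset.sum_add_distrib]
    simp
    ring
  simp [h2]

theorem ball_bound (d k : ℕ) (hd : 1 ≤ d) (f : Fin k → Fin (4 * d)) :
    ((Finset.univ.filter (fun g => k ≤ d * agr f g)).card : ℝ) * Real.exp (k / (2 * d))
      ≤ (4 * d : ℝ) ^ k := by
  have hd0 : (0 : ℝ) < d := by exact_mod_cast hd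
  have h1 : ((Finset.univ.filter (fun g => k ≤ d * agr f g)).card : ℝ) * Real.exp (k / d)
      ≤ ∑ g : Fin k → Fin (4 * d), Real.exp (agr f g) := by
    rw [← nsmul_eq_mul]
    refine (Finset.card_nsmul_le_sum _ (fun g => Real.exp (agr f g)) _ ?_).trans
      (Finset.sum_le_sum_of_subset_of_nonneg (Finset.filter_subset _ _)
        (fun _ _ _ => (Real.exp_pos _).le))
    intro g hg
    have hg := (Finset.mem_filter.1 hg).2
    apply Real.exp_le_exp.2
    rw [div_le_iff₀ hd0]
    have : (k : ℝ) ≤ d * agr f g := by exact_mod_cast hg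
    linarith
  rw [sum_exp_agr] at h1
  have he := Real.exp_one_lt_three
  have h2 : (Real.exp 1 + ((4 * d : ℕ) - 1 : ℝ)) ^ k ≤
      (4 * d : ℝ) ^ k * Real.exp (k / (2 * d)) := by
    have : (k : ℝ) / (2 * d) = k * (1 / (2 * d)) := by ring
    rw [this, Real.exp_nat_mul, ← mul_pow]
    apply pow_le_pow_left₀
    · push_cast; have := Real.exp_pos 1; have : (1 : ℝ) ≤ d := by exact_mod_cast hd
      linarith
    · have h3 := Real.add_one_le_exp (1 / (2 * d : ℝ))
      have h4 : (4 * d : ℝ) * (1 / (2 * d) + 1) = 4 * d + 2 := by field_simp; ring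
      have h5 := mul_le_mul_of_nonneg_left h3 (by positivity : (0 : ℝ) ≤ 4 * d)
      push_cast; linarith
  have h3 : Real.exp ((k : ℝ) / d) = Real.exp (k / (2 * d)) * Real.exp (k / (2 * d)) := by
    rw [← Real.exp_add]; congr 1; field_simp; ring
  rw [h3, ← mul_assoc] at h1
  exact le_of_mul_le_mul_right (h1.trans h2) (Real.exp_pos _)

theorem exists_code (d k : ℕ) (hd : 1 ≤ d) :
    ∃ C : Finset (Fin k → Fin (4 * d)),
      (∀ a ∈ C, ∀ b ∈ C, a ≠ b → d * agr a b < k) ∧ Real.exp (k / (2 * d)) ≤ C.card := by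
  classical
  have hd0 : (0 : ℝ) < d := by exact_mod_cast hd
  obtain ⟨C, hC, hcov⟩ := greedy_code (fun f g : Fin k → Fin (4 * d) => k ≤ d * agr f g)
    (fun a => by simp only [agr]; simp; nlinarith)
    (fun a b h => by
      have : agr b a = agr a b := by simp only [agr, eq_comm]
      rw [this]; exact h)
  refine ⟨C, fun a ha b hb hab => not_le.1 (hC a ha b hb hab), ?_⟩
  have h1 : ((4 * d : ℝ)) ^ k ≤
      ∑ f ∈ C, ((Finset.univ.filter (fun g => k ≤ d * agr f g)).card : ℝ) := by
    have : (Finset.univ : Finset (Fin k → Fin (4 * d))) ⊆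
        C.biUnion (fun f => Finset.univ.filter (fun g => k ≤ d * agr f g)) := by
      intro g _
      obtain ⟨b, hb, h⟩ := hcov g
      simp only [Finset.mem_biUnion, Finset.mem_filter, Finset.mem_univ, true_and]
      exact ⟨b, hb, h⟩
    have h := (Finset.card_le_card this).trans Finset.card_biUnion_le
    simp only [Finset.card_univ, Fintype.card_fun, Fintype.card_fin] at h
    exact_mod_cast h
  have h2 := mul_le_mul_of_nonneg_right h1 (Real.exp_pos ((k : ℝ) / (2 * d))).le
  rw [Finset.sum_mul] at h2
  have h3 := h2.trans (Finset.sum_le_card_nsmul C _ _ (fun f _ => ball_bound d k hd f))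
  rw [nsmul_eq_mul, mul_comm] at h3
  exact le_of_mul_le_mul_right h3 (by positivity)

/-- Hwang–T. Sós: for every `d ≥ 1` and `n ≥ 1` there is a `d`-union-free
family `𝓕` of subsets of `[n]` with `|𝓕| ≥ (1/2)·(1 + 1/(16 d²))^n`. -/
theorem exists_dUnionFree_large (d n : ℕ) (hd : 1 ≤ d) (hn : 1 ≤ n) :
    ∃ 𝓕 : Finset (Finset (Fin n)),
      (∀ G H : Fin d → Finset (Fin n),
        Function.Injective G → Function.Injective H →
        (∀ i, G i ∈ 𝓕) → (∀ i, H i ∈ 𝓕) →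
        Finset.univ.sup G = Finset.univ.sup H →
        Finset.image G Finset.univ = Finset.image H Finset.univ) ∧
      (1 / 2 : ℝ) * (1 + 1 / (16 * (d : ℝ) ^ 2)) ^ n ≤ (𝓕.card : ℝ) := by
  classical
  have hd1 : (1 : ℝ) ≤ d := by exact_mod_cast hd
  have hd0 : (0 : ℝ) < d := by linarith
  obtain ⟨k, hk⟩ : ∃ k, k = n / (4 * d) := ⟨_, rfl⟩
  have hk1 : 4 * d * k ≤ n := by rw [hk]; exact Nat.mul_div_le n (4 * d)
  have hk2 : n ≤ 4 * d * (k + 1) := by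
    rw [hk]; exact (Nat.lt_mul_div_succ n (by omega)).le
  have hpow : (1 + 1 / (16 * (d : ℝ) ^ 2)) ^ n ≤ Real.exp ((k + 1) / (4 * d)) := by
    have h1 : (1 + 1 / (16 * (d : ℝ) ^ 2)) ^ n ≤ Real.exp (n * (1 / (16 * (d : ℝ) ^ 2))) := by
      rw [Real.exp_nat_mul]
      apply pow_le_pow_left₀ (by positivity)
      have := Real.add_one_le_exp (1 / (16 * (d : ℝ) ^ 2))
      linarith
    refine h1.trans (Real.exp_le_exp.2 ?_)
    have h2 : (n : ℝ) ≤ 4 * d * (k + 1) := by exact_mod_cast hk2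
    have h3 : ((k : ℝ) + 1) / (4 * d) = (4 * d * (k + 1)) * (1 / (16 * (d : ℝ) ^ 2)) := by
      field_simp; ring
    rw [h3]
    exact mul_le_mul_of_nonneg_right h2 (by positivity)
  obtain ⟨C, hC, hcard⟩ := exists_code d k hd
  obtain ⟨e⟩ : Nonempty (Fin k × Fin (4 * d) ↪ Fin n) := by
    apply Function.Embedding.nonempty_of_card_le
    simp only [Fintype.card_prod, Fintype.card_fin]
    linarith
  let S : (Fin k → Fin (4 * d)) → Finset (Fin n) :=
    fun f => Finset.univ.image (fun i => e (i, f i))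
  have hmem : ∀ (f g : Fin k → Fin (4 * d)) (i : Fin k), e (i, f i) ∈ S g ↔ f i = g i := by
    intro f g i
    simp only [S, Finset.mem_image, Finset.mem_univ, true_and]
    constructor
    · rintro ⟨j, hj⟩
      have h := e.injective hj
      simp only [Prod.mk.injEq] at h
      obtain ⟨rfl, h⟩ := h
      exact h.symm
    · intro h; exact ⟨i, by rw [h]⟩
  have hinj : Function.Injective S := by
    intro f g h
    funext i
    rw [← hmem, ← h, hmem]
  have key : ∀ f ∈ C, ∀ H : Fin d → Finset (Fin n), (∀ j, H j ∈ C.image S) →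
      S f ⊆ Finset.univ.sup H → ∃ j, H j = S f := by
    intro f hf H hH hsub
    by_contra! hne
    have hH' : ∀ j, ∃ g ∈ C, S g = H j := fun j => Finset.mem_image.1 (hH j)
    choose g hg hgS using hH'
    have hcov : (Finset.univ : Finset (Fin k)) ⊆
        (Finset.univ : Finset (Fin d)).biUnion
          (fun j => Finset.univ.filter (fun i => f i = g j i)) := by
      intro i _
      have h := hsub ((hmem f f i).2 rfl)
      rw [Finset.mem_sup] at h
      obtain ⟨j, _, hj⟩ := h
      rw [← hgS, hmem] at hj
      simp only [Finset.mem_biUnion, Finset.mem_filter, Finset.mem_univ, true_and]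
      exact ⟨j, hj⟩
    have h1 : k ≤ ∑ j, agr f (g j) := by
      have := (Finset.card_le_card hcov).trans Finset.card_biUnion_le
      simpa [agr] using this
    have h2 : ∑ j : Fin d, d * agr f (g j) < ∑ j : Fin d, k := by
      apply Finset.sum_lt_sum_of_nonempty ⟨⟨0, hd⟩, Finset.mem_univ _⟩
      intro j _
      apply hC f hf _ (hg j)
      rintro rfl
      exact hne j (hgS j).symm
    rw [← Finset.mul_sum] at h2
    simp only [Finset.sum_const, Finset.card_univ, Fintype.card_fin, smul_eq_mul] at h2
    exact absurd h2 (not_lt.2 (Nat.mul_le_mul_left d h1))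
  have key2 : ∀ G H : Fin d → Finset (Fin n), (∀ i, G i ∈ C.image S) →
      (∀ i, H i ∈ C.image S) → Finset.univ.sup G = Finset.univ.sup H →
      Finset.image G Finset.univ ⊆ Finset.image H Finset.univ := by
    intro G H hG hH heq x hx
    obtain ⟨i, _, rfl⟩ := Finset.mem_image.1 hx
    obtain ⟨f, hf, hfS⟩ := Finset.mem_image.1 (hG i)
    obtain ⟨j, hj⟩ := key f hf H hH (by
      rw [hfS, ← heq]; exact Finset.le_sup (f := G) (Finset.mem_univ i))
    exact Finset.mem_image.2 ⟨j, Finset.mem_univ _, hj.trans hfS⟩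
  refine ⟨C.image S, fun G H _ _ hG hH heq =>
    (key2 G H hG hH heq).antisymm (key2 H G hH hG heq.symm), ?_⟩
  rw [Finset.card_image_of_injective _ hinj]
  refine le_trans ?_ hcard
  rcases Nat.eq_zero_or_pos k with h0 | hpos
  · rw [h0] at hpow ⊢
    have h1 : Real.exp (((0 : ℕ) + 1) / (4 * d)) ≤ 2 := by
      have h2 : Real.exp ((((0 : ℕ) : ℝ) + 1) / (4 * d)) ≤ Real.exp (Real.log 2) := by
        apply Real.exp_le_exp.2
        have := Real.log_two_gt_d9
        have h3 : (((0 : ℕ) : ℝ) + 1) / (4 * d) ≤ 1 / 4 := by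
          rw [div_le_iff₀ (by positivity)]; push_cast; linarith
        linarith
      rwa [Real.exp_log (by norm_num)] at h2
    simp only [Nat.cast_zero, zero_div, Real.exp_zero]
    linarith
  · have hk1' : (1 : ℝ) ≤ k := by exact_mod_cast hpos
    have h1 : Real.exp (((k : ℝ) + 1) / (4 * d)) ≤ Real.exp (k / (2 * d)) := by
      apply Real.exp_le_exp.2
      rw [div_le_div_iff₀ (by positivity) (by positivity)]
      nlinarith
    have h0 : 0 ≤ (1 + 1 / (16 * (d : ℝ) ^ 2)) ^ n := by positivity
    linarith
end

section
/- For all integers d ≥ 2 and r, g ≥ 3 there exists N such that for every n ≥ N with r dividing d·n there is a family 𝓕 of subsets of [n] with the following properties: every member of 𝓕 has exactly r elements; every element of [n] belongs to exactly d members of 𝓕; any two distinct members of 𝓕 intersect in at most one element; and 𝓕 has Berge-girth at least g, i.e. for every k with 2 ≤ k ≤ g−1 there do not exist k pairwise distinct members E_1,…,E_k of 𝓕 and k pairwise distinct elements x_1,…,x_k of [n] such that x_i ∈ E_i and x_{i+1} ∈ E_i for all 1 ≤ i ≤ k (indices taken modulo k, so x_1 ∈ E_k). -/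
namespace BergeGirth

open Finset

variable {A B : Type*}

/-- Adjacency in the bipartite graph with edge set `S`. -/
def Link (S : Finset (A × B)) (u v : A ⊕ B) : Prop :=
  ∃ p ∈ S, (u = Sum.inl p.1 ∧ v = Sum.inr p.2) ∨ (u = Sum.inr p.2 ∧ v = Sum.inl p.1)

/-- `D S k u v`: there is a walk of length at most `k` from `u` to `v`. -/
inductive D (S : Finset (A × B)) : ℕ → A ⊕ B → A ⊕ B → Prop
  | nil (k : ℕ) (u : A ⊕ B) : D S k u u
  | cons {k : ℕ} {u w v : A ⊕ B} : Link S u w → D S k w v → D S (k + 1) u v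

theorem Link.symm {S : Finset (A × B)} {u v : A ⊕ B} (h : Link S u v) : Link S v u := by
  obtain ⟨p, hp, h⟩ := h
  exact ⟨p, hp, by tauto⟩

theorem Link.mono {S T : Finset (A × B)} (hST : S ⊆ T) {u v : A ⊕ B} (h : Link S u v) :
    Link T u v := by
  obtain ⟨p, hp, h⟩ := h
  exact ⟨p, hST hp, h⟩

theorem Link.of_mem {S : Finset (A × B)} {a : A} {b : B} (h : (a, b) ∈ S) :
    Link S (Sum.inl a) (Sum.inr b) := ⟨(a, b), h, Or.inl ⟨rfl, rfl⟩⟩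

theorem D.mono {S T : Finset (A × B)} (hST : S ⊆ T) {k : ℕ} {u v : A ⊕ B} (h : D S k u v) :
    ∀ {l : ℕ}, k ≤ l → D T l u v := by
  induction h with
  | nil k u => intro l _; exact D.nil _ _
  | cons hl _ ih =>
    intro l hkl
    obtain ⟨l, rfl⟩ : ∃ l', l = l' + 1 := ⟨l - 1, by omega⟩
    exact D.cons (hl.mono hST) (ih (by omega))

theorem D.trans {S : Finset (A × B)} {i j : ℕ} {u v w : A ⊕ B} (h : D S i u v)
    (h' : D S j v w) : D S (i + j) u w := by
  induction h with
  | nil k u => exact h'.mono (Subset.refl _) (by omega)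
  | @cons k _ _ _ hl _ ih =>
    have := D.cons hl (ih h')
    exact this.mono (Subset.refl _) (by omega)

theorem D.one {S : Finset (A × B)} {u v : A ⊕ B} (h : Link S u v) : D S 1 u v :=
  D.cons h (D.nil 0 _)

theorem D.symm {S : Finset (A × B)} {k : ℕ} {u v : A ⊕ B} (h : D S k u v) : D S k v u := by
  induction h with
  | nil k u => exact D.nil _ _
  | cons hl _ ih => exact ih.trans (D.one hl.symm)

variable [DecidableEq A] [DecidableEq B]

theorem D.insert_cases {S : Finset (A × B)} {p : A} {q : B} {k : ℕ} {u v : A ⊕ B}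
    (h : D (insert (p, q) S) k u v) :
    D S k u v ∨ ∃ i j, i + j + 1 ≤ k ∧
      ((D S i u (Sum.inl p) ∧ D S j (Sum.inr q) v) ∨
        (D S i u (Sum.inr q) ∧ D S j (Sum.inl p) v)) := by
  induction h with
  | nil k u => exact Or.inl (D.nil _ _)
  | @cons k u w v hl _ ih =>
    have hl' : Link S u w ∨ (u = Sum.inl p ∧ w = Sum.inr q) ∨ (u = Sum.inr q ∧ w = Sum.inl p) := by
      obtain ⟨x, hx, hl⟩ := hl
      rcases Finset.mem_insert.1 hx with rfl | hx
      · exact Or.inr hl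
      · exact Or.inl ⟨x, hx, hl⟩
    rcases hl' with hl' | ⟨rfl, rfl⟩ | ⟨rfl, rfl⟩
    · rcases ih with ih | ⟨i, j, hij, ⟨h1, h2⟩ | ⟨h1, h2⟩⟩
      · exact Or.inl (D.cons hl' ih)
      · exact Or.inr ⟨i + 1, j, by omega, Or.inl ⟨D.cons hl' h1, h2⟩⟩
      · exact Or.inr ⟨i + 1, j, by omega, Or.inr ⟨D.cons hl' h1, h2⟩⟩
    · rcases ih with ih | ⟨i, j, hij, ⟨h1, h2⟩ | ⟨h1, h2⟩⟩
      · exact Or.inr ⟨0, k, by omega, Or.inl ⟨D.nil _ _, ih⟩⟩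
      · exact Or.inr ⟨0, j, by omega, Or.inl ⟨D.nil _ _, h2⟩⟩
      · exact Or.inl (h2.mono (Subset.refl _) (by omega))
    · rcases ih with ih | ⟨i, j, hij, ⟨h1, h2⟩ | ⟨h1, h2⟩⟩
      · exact Or.inr ⟨0, k, by omega, Or.inr ⟨D.nil _ _, ih⟩⟩
      · exact Or.inl (h2.mono (Subset.refl _) (by omega))
      · exact Or.inr ⟨0, j, by omega, Or.inr ⟨D.nil _ _, h2⟩⟩

/-- Biregularity. -/
def Reg (d r : ℕ) (S : Finset (A × B)) : Prop :=
  (∀ a : A, (S.filter (fun p => p.1 = a)).card = d) ∧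
  (∀ b : B, (S.filter (fun p => p.2 = b)).card = r)

open Classical in
theorem card_ball_le [Fintype A] [Fintype B] {d r : ℕ} {S : Finset (A × B)} (hS : Reg d r S)
    (k : ℕ) : ∀ u : A ⊕ B, (univ.filter (fun v => D S k u v)).card ≤ (d + r + 1) ^ k := by
  induction k with
  | zero =>
    intro u
    have : univ.filter (fun v => D S 0 u v) ⊆ {u} := by
      intro v hv
      simp only [mem_filter, mem_univ, true_and] at hv
      cases hv
      simp
    simpa using card_le_card this
  | succ k ih =>
    intro u
    have hN : (univ.filter (fun v => Link S u v)).card ≤ d + r := by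
      rcases u with a | b
      · have : univ.filter (fun v => Link S (Sum.inl a) v) ⊆
            (S.filter (fun p => p.1 = a)).image (fun p => Sum.inr p.2) := by
          intro v hv
          simp only [mem_filter, mem_univ, true_and] at hv
          obtain ⟨p, hp, ⟨h1, h2⟩ | ⟨h1, h2⟩⟩ := hv
          · simp only [mem_image, mem_filter]
            exact ⟨p, ⟨hp, (Sum.inl.inj h1).symm⟩, h2.symm⟩
          · cases h1
        have h2 := (card_le_card this).trans card_image_le
        rw [hS.1 a] at h2
        omega
      · have : univ.filter (fun v => Link S (Sum.inr b) v) ⊆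
            (S.filter (fun p => p.2 = b)).image (fun p => Sum.inl p.1) := by
          intro v hv
          simp only [mem_filter, mem_univ, true_and] at hv
          obtain ⟨p, hp, ⟨h1, h2⟩ | ⟨h1, h2⟩⟩ := hv
          · cases h1
          · simp only [mem_image, mem_filter]
            exact ⟨p, ⟨hp, (Sum.inr.inj h1).symm⟩, h2.symm⟩
        have h2 := (card_le_card this).trans card_image_le
        rw [hS.2 b] at h2
        omega
    have hsub : univ.filter (fun v => D S (k + 1) u v) ⊆
        {u} ∪ (univ.filter (fun v => Link S u v)).biUnion
          (fun w => univ.filter (fun v => D S k w v)) := by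
      intro v hv
      simp only [mem_filter, mem_univ, true_and] at hv
      simp only [mem_union, mem_singleton, mem_biUnion, mem_filter, mem_univ, true_and]
      cases hv with
      | nil => exact Or.inl rfl
      | cons hl h => exact Or.inr ⟨_, hl, h⟩
    have h1 := card_le_card hsub
    have h2 := card_union_le {u} ((univ.filter (fun v => Link S u v)).biUnion
          (fun w => univ.filter (fun v => D S k w v)))
    have h3 := card_biUnion_le_card_mul (univ.filter (fun v => Link S u v))
          (fun w => univ.filter (fun v => D S k w v)) _ (fun w _ => ih w)
    have h4 : (univ.filter (fun v => Link S u v)).card * (d + r + 1) ^ k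
      ≤ (d + r) * (d + r + 1) ^ k := Nat.mul_le_mul_right _ hN
    have h5 : 1 ≤ (d + r + 1) ^ k := Nat.one_le_pow _ _ (by omega)
    have h6 : (d + r + 1) ^ (k + 1) = (d + r) * (d + r + 1) ^ k + (d + r + 1) ^ k := by ring
    rw [card_singleton] at h2
    omega

/-- The switched edge set. -/
def switch (S : Finset (A × B)) (a c : A) (b f : B) : Finset (A × B) :=
  insert (a, f) (insert (c, b) ((S.erase (a, b)).erase (c, f)))

theorem reg_switch {d r : ℕ} {S : Finset (A × B)} (hS : Reg d r S) {a c : A} {b f : B}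
    (hab : (a, b) ∈ S) (hcf : (c, f) ∈ S) (hac : a ≠ c) (hbf : b ≠ f)
    (haf : (a, f) ∉ S) (hcb : (c, b) ∉ S) : Reg d r (switch S a c b f) := by
  have key : ∀ w : A × B → ℕ, w (a, f) + w (c, b) = w (a, b) + w (c, f) →
      ∑ p ∈ switch S a c b f, w p = ∑ p ∈ S, w p := by
    intro w hw
    have h1 : (c, f) ∈ S.erase (a, b) := by
      simp [hcf, Ne.symm hac]
    have e1 := add_sum_erase S w hab
    have e2 := add_sum_erase _ w h1
    unfold switch
    rw [sum_insert, sum_insert]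
    · omega
    · simp [hcb]
    · simp [haf, hac]
  constructor
  · intro x
    rw [← hS.1 x, card_filter, card_filter]
    apply key
    simp only
  · intro x
    rw [← hS.2 x, card_filter, card_filter]
    apply key
    simp only
    omega

/-- No edge lies on a cycle of length at most `t + 1`. -/
def Good (t : ℕ) (S : Finset (A × B)) : Prop :=
  ∀ p ∈ S, ¬ D (S.erase p) t (Sum.inl p.1) (Sum.inr p.2)

theorem switch_step {t : ℕ} {S : Finset (A × B)} (hS : Good t S) {a c : A} {b f : B}
    (h1 : ¬ D S (t + 1) (Sum.inl a) (Sum.inr f)) (h2 : ¬ D S (t + 1) (Sum.inl a) (Sum.inl c))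
    (h3 : ¬ D S (t + 1) (Sum.inr b) (Sum.inr f)) (h4 : ¬ D S (t + 1) (Sum.inr b) (Sum.inl c))
    (hab : (a, b) ∈ S) (hac : a ≠ c)
    (p : A × B) (hp : p ∈ switch S a c b f) (k : ℕ) (hk : k ≤ t + 1)
    (hD : D ((switch S a c b f).erase p) k (Sum.inl p.1) (Sum.inr p.2)) :
    p ∈ S ∧ p ≠ (a, b) ∧ D (S.erase p) k (Sum.inl p.1) (Sum.inr p.2) := by
  set H := (S.erase (a, b)).erase (c, f) with hH
  have hHS : H ⊆ S := (erase_subset _ _).trans (erase_subset _ _)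
  have hHe : H ⊆ S.erase (a, b) := erase_subset _ _
  have haf : (a, f) ∉ S := fun h =>
    h1 ((D.one (Link.of_mem h)).mono (Subset.refl _) (by omega))
  have hcb : (c, b) ∉ S := fun h =>
    h4 ((D.one (Link.of_mem h).symm).mono (Subset.refl _) (by omega))
  have c1 : ¬ D ((switch S a c b f).erase (a, f)) (t + 1) (Sum.inl a) (Sum.inr f) := by
    intro h
    have h' : D (insert (c, b) H) (t + 1) (Sum.inl a) (Sum.inr f) :=
      h.mono (by unfold switch; exact erase_insert_subset _ _) le_rfl
    rcases h'.insert_cases with h | ⟨i, j, hij, ⟨ha, hb⟩ | ⟨ha, hb⟩⟩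
    · exact h1 (h.mono hHS le_rfl)
    · exact h2 (ha.mono hHS (by omega))
    · exact hS _ hab (ha.mono hHe (by omega))
  have c2 : ¬ D ((switch S a c b f).erase (c, b)) (t + 1) (Sum.inl c) (Sum.inr b) := by
    intro h
    have h' : D (insert (a, f) H) (t + 1) (Sum.inl c) (Sum.inr b) :=
      h.mono (by
        unfold switch; rw [Finset.insert_comm]; exact erase_insert_subset _ _) le_rfl
    rcases h'.insert_cases with h | ⟨i, j, hij, ⟨ha, hb⟩ | ⟨ha, hb⟩⟩
    · exact h4 (h.symm.mono hHS le_rfl)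
    · exact h2 (ha.symm.mono hHS (by omega))
    · exact hS _ hab (hb.mono hHe (by omega))
  have hp' : p ∈ H := by
    unfold switch at hp
    rcases mem_insert.1 hp with rfl | hp
    · exact absurd (hD.mono (Subset.refl _) hk) c1
    rcases mem_insert.1 hp with rfl | hp
    · exact absurd (hD.mono (Subset.refl _) hk) c2
    exact hp
  have hpS := hHS hp'
  refine ⟨hpS, (mem_erase.1 (hHe hp')).1, ?_⟩
  have hpaf : p ≠ (a, f) := by rintro rfl; exact haf hpS
  have hpcb : p ≠ (c, b) := by rintro rfl; exact hcb hpS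
  have hne : (c, b) ≠ (a, f) := by
    intro h; exact hac (Prod.mk.inj h).1.symm
  have hpl : ∀ T : Finset (A × B), p ∈ T → Link T (Sum.inl p.1) (Sum.inr p.2) :=
    fun T h => Link.of_mem h
  have hsub : (switch S a c b f).erase p ⊆ insert (a, f) (insert (c, b) (H.erase p)) := by
    intro x hx
    simp only [switch, mem_erase, mem_insert] at hx ⊢
    simp only [hH, mem_erase]
    tauto
  have hs1 : insert (c, b) (H.erase p) ⊆ (switch S a c b f).erase (a, f) := by
    intro x hx
    simp only [mem_insert, mem_erase, switch] at hx ⊢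
    rcases hx with rfl | ⟨hx1, hx2⟩
    · exact ⟨hne, by tauto⟩
    · exact ⟨by rintro rfl; exact haf (hHS hx2), Or.inr (Or.inr (by simpa [hH] using hx2))⟩
  have hs2 : H.erase p ⊆ (switch S a c b f).erase (c, b) := by
    intro x hx
    simp only [mem_erase, switch, mem_insert] at hx ⊢
    obtain ⟨hx1, hx2⟩ := hx
    exact ⟨by rintro rfl; exact hcb (hHS hx2), Or.inr (Or.inr (by simpa [hH] using hx2))⟩
  have hp1 : p ∈ (switch S a c b f).erase (a, f) := mem_erase.2 ⟨hpaf, hp⟩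
  have hp2 : p ∈ (switch S a c b f).erase (c, b) := mem_erase.2 ⟨hpcb, hp⟩
  rcases (hD.mono hsub le_rfl).insert_cases with h | ⟨i, j, hij, ⟨ha, hb⟩ | ⟨ha, hb⟩⟩
  · rcases h.insert_cases with h | ⟨i, j, hij, ⟨ha, hb⟩ | ⟨ha, hb⟩⟩
    · exact h.mono (erase_subset_erase _ hHS) le_rfl
    · exfalso
      apply c2
      have := ((ha.symm.mono hs2 le_rfl).trans (D.one (hpl _ hp2))).trans
        (hb.symm.mono hs2 le_rfl)
      exact this.mono (Subset.refl _) (by omega)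
    · exfalso
      apply c2
      have := ((hb.mono hs2 le_rfl).trans (D.one (hpl _ hp2).symm)).trans
        (ha.mono hs2 le_rfl)
      exact this.mono (Subset.refl _) (by omega)
  · exfalso
    apply c1
    have := ((ha.symm.mono hs1 le_rfl).trans (D.one (hpl _ hp1))).trans
      (hb.symm.mono hs1 le_rfl)
    exact this.mono (Subset.refl _) (by omega)
  · exfalso
    apply c1
    have := ((hb.mono hs1 le_rfl).trans (D.one (hpl _ hp1).symm)).trans
      (ha.mono hs1 le_rfl)
    exact this.mono (Subset.refl _) (by omega)

open Classical in
theorem good_succ [Fintype A] [Fintype B] {d r t : ℕ} (hd : 1 ≤ d)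
    (hA : 2 * (d + r + 1) ^ (t + 2) < Fintype.card A)
    (h : ∃ S : Finset (A × B), Reg d r S ∧ Good t S) :
    ∃ S : Finset (A × B), Reg d r S ∧ Good (t + 1) S := by
  let bad : Finset (A × B) → Finset (A × B) := fun S =>
    S.filter (fun p => D (S.erase p) (t + 1) (Sum.inl p.1) (Sum.inr p.2))
  suffices H : ∀ N : ℕ, ∀ S : Finset (A × B), Reg d r S → Good t S → (bad S).card = N →
      ∃ S : Finset (A × B), Reg d r S ∧ Good (t + 1) S by
    obtain ⟨S, h1, h2⟩ := h
    exact H _ S h1 h2 rfl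
  intro N
  induction N using Nat.strong_induction_on with
  | _ N ih =>
  intro S hR hG hN
  by_cases hgood : Good (t + 1) S
  · exact ⟨S, hR, hgood⟩
  unfold Good at hgood
  push Not at hgood
  obtain ⟨⟨a, b⟩, hab, hD⟩ := hgood
  obtain ⟨c, hc⟩ : ∃ c : A, ¬ D S (t + 2) (Sum.inl a) (Sum.inl c) ∧
      ¬ D S (t + 2) (Sum.inr b) (Sum.inl c) := by
    by_contra hcon
    push Not at hcon
    have hsub : (univ : Finset A).image Sum.inl ⊆
        univ.filter (fun v => D S (t + 2) (Sum.inl a) v) ∪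
        univ.filter (fun v => D S (t + 2) (Sum.inr b) v) := by
      intro v hv
      obtain ⟨c, _, rfl⟩ := mem_image.1 hv
      simp only [mem_union, mem_filter, mem_univ, true_and]
      by_cases hh : D S (t + 2) (Sum.inl a) (Sum.inl c)
      · exact Or.inl hh
      · exact Or.inr (hcon c hh)
    have e1 := card_le_card hsub
    rw [card_image_of_injective _ Sum.inl_injective, card_univ] at e1
    have e2 := card_union_le (univ.filter (fun v => D S (t + 2) (Sum.inl a) v))
        (univ.filter (fun v => D S (t + 2) (Sum.inr b) v))
    have e3 := card_ball_le hR (t + 2) (Sum.inl a)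
    have e4 := card_ball_le hR (t + 2) (Sum.inr b)
    omega
  obtain ⟨⟨c', f⟩, hf⟩ : (S.filter (fun p => p.1 = c)).Nonempty := by
    rw [← card_pos, hR.1 c]; omega
  obtain ⟨hcf, rfl⟩ := mem_filter.1 hf
  simp only at hc
  have h1 : ¬ D S (t + 1) (Sum.inl a) (Sum.inr f) := fun h =>
    hc.1 (h.trans (D.one (Link.of_mem hcf).symm))
  have h3 : ¬ D S (t + 1) (Sum.inr b) (Sum.inr f) := fun h =>
    hc.2 (h.trans (D.one (Link.of_mem hcf).symm))
  have h2 : ¬ D S (t + 1) (Sum.inl a) (Sum.inl c') := fun h =>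
    hc.1 (h.mono (Subset.refl _) (by omega))
  have h4 : ¬ D S (t + 1) (Sum.inr b) (Sum.inl c') := fun h =>
    hc.2 (h.mono (Subset.refl _) (by omega))
  have hac : a ≠ c' := by rintro rfl; exact h2 (D.nil _ _)
  have hbf : b ≠ f := by rintro rfl; exact h3 (D.nil _ _)
  have haf : (a, f) ∉ S := fun h =>
    h1 ((D.one (Link.of_mem h)).mono (Subset.refl _) (by omega))
  have hcb : (c', b) ∉ S := fun h =>
    h4 ((D.one (Link.of_mem h).symm).mono (Subset.refl _) (by omega))
  have step := switch_step hG h1 h2 h3 h4 hab hac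
  refine ih _ ?_ (switch S a c' b f) (reg_switch hR hab hcf hac hbf haf hcb) ?_ rfl
  · rw [← hN]
    apply card_lt_card
    rw [ssubset_iff_of_subset]
    · refine ⟨(a, b), mem_filter.2 ⟨hab, hD⟩, ?_⟩
      intro hmem
      obtain ⟨m1, m2⟩ := mem_filter.1 hmem
      exact (step _ m1 _ le_rfl m2).2.1 rfl
    · intro p hp
      obtain ⟨m1, m2⟩ := mem_filter.1 hp
      have := step _ m1 _ le_rfl m2
      exact mem_filter.2 ⟨this.1, this.2.2⟩
  · intro p hp hDp
    have := step p hp t (by omega) hDp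
    exact hG p this.1 this.2.2

theorem good_exists [Fintype A] [Fintype B] {d r T : ℕ} (hd : 1 ≤ d)
    (hA : 2 * (d + r + 1) ^ (T + 2) < Fintype.card A)
    (h : ∃ S : Finset (A × B), Reg d r S) (t : ℕ) (ht : t ≤ T) :
    ∃ S : Finset (A × B), Reg d r S ∧ Good t S := by
  induction t with
  | zero =>
    obtain ⟨S, hS⟩ := h
    refine ⟨S, hS, ?_⟩
    intro p _ hD
    cases hD
  | succ t ih =>
    refine good_succ hd (lt_of_le_of_lt ?_ hA) (ih (by omega))
    exact Nat.mul_le_mul_left _ (Nat.pow_le_pow_right (by omega) (by omega))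

/-- The starting configuration. -/
theorem reg_exists {d r n m : ℕ} (hr : 1 ≤ r) (hn : r ≤ n) (h : d * n = r * m) :
    ∃ S : Finset (Fin n × Fin m), Reg d r S := by
  have hn0 : 0 < n := by omega
  have hdiv : ∀ t : Fin (d * n), t.1 / r < m := fun t =>
    Nat.div_lt_of_lt_mul (by rw [← h]; exact t.2)
  let φ : Fin (d * n) → Fin n × Fin m := fun t =>
    (⟨t.1 % n, Nat.mod_lt _ hn0⟩, ⟨t.1 / r, hdiv t⟩)
  have hφ : Function.Injective φ := by
    intro s t hst
    have h1 : s.1 % n = t.1 % n := congrArg (fun p => p.1.1) hst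
    have h2 : s.1 / r = t.1 / r := congrArg (fun p => p.2.1) hst
    apply Fin.ext
    have a1 := Nat.div_add_mod s.1 r
    have a2 := Nat.div_add_mod t.1 r
    have b1 := Nat.mod_lt s.1 (show r > 0 by omega)
    have b2 := Nat.mod_lt t.1 (show r > 0 by omega)
    rw [h2] at a1
    rcases le_total s.1 t.1 with hle | hle
    · have := (Nat.modEq_iff_dvd' hle).1 h1
      by_contra hne
      have := Nat.le_of_dvd (by omega) this
      omega
    · have := (Nat.modEq_iff_dvd' hle).1 h1.symm
      by_contra hne
      have := Nat.le_of_dvd (by omega) this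
      omega
  refine ⟨univ.image φ, ?_, ?_⟩
  · intro x
    rw [filter_image, card_image_of_injective _ hφ]
    have hlt : ∀ j : Fin d, x.1 + n * j.1 < d * n := by
      intro j
      have h1 : n * (j.1 + 1) ≤ n * d := Nat.mul_le_mul_left _ j.2
      have h2 := x.2
      rw [mul_comm d n]
      rw [mul_add] at h1
      omega
    conv_rhs => rw [← Fintype.card_fin d, ← card_univ]
    symm
    refine card_bij (fun j _ => ⟨x.1 + n * j.1, hlt j⟩) ?_ ?_ ?_
    · intro j _
      simp only [mem_filter, mem_univ, true_and, φ]
      apply Fin.ext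
      simp [Nat.mod_eq_of_lt x.2]
    · intro i _ j _ hij
      have := congrArg Fin.val hij
      simp only at this
      apply Fin.ext
      exact Nat.eq_of_mul_eq_mul_left hn0 (by omega)
    · intro t ht
      simp only [mem_filter, mem_univ, true_and, φ] at ht
      have ht' : t.1 % n = x.1 := congrArg Fin.val ht
      refine ⟨⟨t.1 / n, ?_⟩, mem_univ _, ?_⟩
      · apply Nat.div_lt_of_lt_mul
        exact t.2.trans_eq (mul_comm d n)
      · apply Fin.ext
        simp only
        rw [← ht']
        exact Nat.mod_add_div _ _
  · intro e
    rw [filter_image, card_image_of_injective _ hφ]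
    have hlt : ∀ j : Fin r, j.1 + r * e.1 < d * n := by
      intro j
      have h1 : r * (e.1 + 1) ≤ r * m := Nat.mul_le_mul_left _ e.2
      have h2 := j.2
      rw [mul_add] at h1
      omega
    conv_rhs => rw [← Fintype.card_fin r, ← card_univ]
    symm
    refine card_bij (fun j _ => ⟨j.1 + r * e.1, hlt j⟩) ?_ ?_ ?_
    · intro j _
      simp only [mem_filter, mem_univ, true_and, φ]
      apply Fin.ext
      simp only
      rw [Nat.add_mul_div_left _ _ (by omega), Nat.div_eq_of_lt j.2, zero_add]
    · intro i _ j _ hij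
      have := congrArg Fin.val hij
      simp only at this
      apply Fin.ext
      omega
    · intro t ht
      simp only [mem_filter, mem_univ, true_and, φ] at ht
      have ht' : t.1 / r = e.1 := congrArg Fin.val ht
      refine ⟨⟨t.1 % r, Nat.mod_lt _ (by omega)⟩, mem_univ _, ?_⟩
      apply Fin.ext
      simp only
      rw [← ht']
      exact Nat.mod_add_div _ _

/-- No Berge cycles in the incidence structure. -/
theorem no_berge {t k : ℕ} {S : Finset (A × B)} (hS : Good t S) (hk : 2 ≤ k) (hkt : 2 * k ≤ t)
    (E : ℕ → B) (x : ℕ → A) (hE : ∀ i < k, ∀ j < k, E i = E j → i = j)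
    (hx : ∀ i < k, ∀ j < k, x i = x j → i = j)
    (h : ∀ i < k, (x i, E i) ∈ S ∧ (x ((i + 1) % k), E i) ∈ S) : False := by
  apply hS (x 0, E 0) (h 0 (by omega)).1
  have key : ∀ i < k, D (S.erase (x 0, E 0)) (2 * i) (Sum.inr (E 0)) (Sum.inr (E i)) := by
    intro i
    induction i with
    | zero => intro _; exact D.nil _ _
    | succ i ih =>
      intro hi
      have h1 := (h i (by omega)).2
      rw [Nat.mod_eq_of_lt hi] at h1
      have h2 := (h (i + 1) hi).1
      have hne : x (i + 1) ≠ x 0 := fun hh => by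
        have := hx _ hi 0 (by omega) hh
        omega
      have m1 : (x (i + 1), E i) ∈ S.erase (x 0, E 0) := by
        simp [h1, hne]
      have m2 : (x (i + 1), E (i + 1)) ∈ S.erase (x 0, E 0) := by
        simp [h2, hne]
      exact ((ih (by omega)).trans (D.one (Link.of_mem m1).symm)).trans (D.one (Link.of_mem m2))
  have h1 := key (k - 1) (by omega)
  have h2 := (h (k - 1) (by omega)).2
  rw [Nat.sub_add_cancel (by omega), Nat.mod_self] at h2
  have hne : E (k - 1) ≠ E 0 := fun hh => by
    have := hE (k - 1) (by omega) 0 (by omega) hh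
    omega
  have m1 : (x 0, E (k - 1)) ∈ S.erase (x 0, E 0) := by
    simp [h2, hne]
  exact (h1.trans (D.one (Link.of_mem m1).symm)).symm.mono (Subset.refl _) (by omega)

theorem no_four {t : ℕ} {S : Finset (A × B)} (hS : Good t S) (ht : 4 ≤ t) {x y : A} {e f : B}
    (hxe : (x, e) ∈ S) (hxf : (x, f) ∈ S) (hye : (y, e) ∈ S) (hyf : (y, f) ∈ S)
    (hxy : x ≠ y) : e = f := by
  by_contra hef
  apply hS (x, e) hxe
  have m1 : (x, f) ∈ S.erase (x, e) := by simp [hxf, Ne.symm hef]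
  have m2 : (y, f) ∈ S.erase (x, e) := by simp [hyf, Ne.symm hxy]
  have m3 : (y, e) ∈ S.erase (x, e) := by simp [hye, Ne.symm hxy]
  exact (((D.one (Link.of_mem m1)).trans (D.one (Link.of_mem m2).symm)).trans
    (D.one (Link.of_mem m3))).mono (Subset.refl _) (by omega)

end BergeGirth

/-- for all `d ≥ 2` and `r, g ≥ 3` there is `N` such that for every `n ≥ N`
with `r ∣ d·n` there is an `r`-uniform, `d`-regular, linear family of subsets of `[n]` with
Berge-girth at least `g` (no Berge cycle of length `k` for any `2 ≤ k ≤ g-1`). -/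
theorem exists_linear_regular_uniform_large_girth (d r g : ℕ) (hd : 2 ≤ d) (hr : 3 ≤ r)
    (hg : 3 ≤ g) :
    ∃ N : ℕ, ∀ n : ℕ, N ≤ n → r ∣ d * n →
      ∃ 𝓕 : Finset (Finset (Fin n)),
        (∀ F ∈ 𝓕, F.card = r) ∧
        (∀ x : Fin n, (𝓕.filter (fun F => x ∈ F)).card = d) ∧
        (∀ F ∈ 𝓕, ∀ G ∈ 𝓕, F ≠ G → (F ∩ G).card ≤ 1) ∧
        (∀ k : ℕ, 2 ≤ k → k ≤ g - 1 →
          ¬ ∃ (E : ℕ → Finset (Fin n)) (x : ℕ → Fin n),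
            (∀ i < k, E i ∈ 𝓕) ∧
            (∀ i < k, ∀ j < k, E i = E j → i = j) ∧
            (∀ i < k, ∀ j < k, x i = x j → i = j) ∧
            (∀ i < k, x i ∈ E i ∧ x ((i + 1) % k) ∈ E i)) := by
  classical
  refine ⟨2 * (d + r + 1) ^ (2 * g + 2) + r + 1, ?_⟩
  intro n hn hdvd
  obtain ⟨m, hm⟩ := hdvd
  obtain ⟨S, hR, hG⟩ := BergeGirth.good_exists (A := Fin n) (B := Fin m) (d := d) (r := r)
    (T := 2 * g) (by omega) (by rw [Fintype.card_fin]; omega)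
    (BergeGirth.reg_exists (by omega) (by omega) hm) (2 * g) le_rfl
  let blk : Fin m → Finset (Fin n) := fun e => Finset.univ.filter (fun x => (x, e) ∈ S)
  have hblk : ∀ e x, x ∈ blk e ↔ (x, e) ∈ S := by
    intro e x
    simp [blk]
  have hcard : ∀ e, (blk e).card = r := by
    intro e
    rw [← hR.2 e]
    refine Finset.card_bij (fun x _ => (x, e)) ?_ ?_ ?_
    · intro x hx
      simpa using (hblk e x).1 hx
    · intro x _ y _ hxy
      exact (Prod.mk.inj hxy).1
    · rintro ⟨x, e'⟩ hp
      obtain ⟨h1, h2⟩ := Finset.mem_filter.1 hp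
      simp only at h2
      subst h2
      exact ⟨x, (hblk _ _).2 h1, rfl⟩
  have hlin : ∀ e f, e ≠ f → (blk e ∩ blk f).card ≤ 1 := by
    intro e f hef
    by_contra hcon
    obtain ⟨x, hx, y, hy, hxy⟩ := Finset.one_lt_card.1 (not_le.1 hcon)
    simp only [Finset.mem_inter, hblk] at hx hy
    exact hef (BergeGirth.no_four hG (by omega) hx.1 hx.2 hy.1 hy.2 hxy)
  have hinj : Function.Injective blk := by
    intro e f hef
    by_contra hne
    have h1 := hlin e f hne
    rw [hef, Finset.inter_self, hcard] at h1
    omega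
  refine ⟨Finset.univ.image blk, ?_, ?_, ?_, ?_⟩
  · intro F hF
    obtain ⟨e, _, rfl⟩ := Finset.mem_image.1 hF
    exact hcard e
  · intro x
    rw [Finset.filter_image, Finset.card_image_of_injective _ hinj, ← hR.1 x]
    refine Finset.card_bij (fun e _ => (x, e)) ?_ ?_ ?_
    · intro e he
      simpa [hblk] using he
    · intro e _ f _ hef
      exact (Prod.mk.inj hef).2
    · rintro ⟨y, e⟩ hp
      obtain ⟨h1, h2⟩ := Finset.mem_filter.1 hp
      simp only at h2
      subst h2
      exact ⟨e, by simpa [hblk] using h1, rfl⟩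
  · intro F hF G hG' hFG
    obtain ⟨e, _, rfl⟩ := Finset.mem_image.1 hF
    obtain ⟨f, _, rfl⟩ := Finset.mem_image.1 hG'
    exact hlin e f (fun h => hFG (by rw [h]))
  · rintro k hk hkg ⟨E, x, hE, hEi, hxi, hinc⟩
    have hE' : ∀ i < k, ∃ e, blk e = E i := by
      intro i hi
      obtain ⟨e, _, he⟩ := Finset.mem_image.1 (hE i hi)
      exact ⟨e, he⟩
    obtain ⟨e0, _⟩ := hE' 0 (by omega)
    let E' : ℕ → Fin m := fun i => if h : i < k then (hE' i h).choose else e0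
    have hE'' : ∀ i < k, blk (E' i) = E i := by
      intro i hi
      simp only [E', hi, dif_pos]
      exact (hE' i hi).choose_spec
    refine BergeGirth.no_berge hG hk (by omega) E' x ?_ hxi ?_
    · intro i hi j hj hij
      apply hEi i hi j hj
      rw [← hE'' i hi, ← hE'' j hj, hij]
    · intro i hi
      have := hinc i hi
      rw [← hE'' i hi, hblk, hblk] at this
      exact this
end
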